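/- Let ε > 0, δ ∈ (0,1), k > 1, τ > 0, and define S_k(α) = Σ_{δX ≤ p^k ≤ X} (log p) e(p^k α), the sum running over primes p. Then ∫_{−τ}^{τ} |S_k(α)|⁴ dα ≪_{k,δ,ε} (τ X^{2/k} + X^{4/k − 1}) X^{ε}. -/

import Mathlib

open Real MeasureTheory

/-- `e(x) = exp(2πix)` -/
noncomputable def e (x : ℝ) : ℂ := Complex.exp (2 * Real.pi * Complex.I * x)

/-- `S_k(α) = Σ_{δX ≤ p^k ≤ X} (log p) e(p^k α)`, sum over primes `p`. -/
noncomputable def Sk (δ X k : ℝ) (α : ℝ) : ℂ :=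
  ∑ p ∈ (Finset.Icc 1 (Nat.floor X)).filter
      (fun p : ℕ => p.Prime ∧ δ * X ≤ (p : ℝ) ^ k ∧ (p : ℝ) ^ k ≤ X),
    (Real.log p : ℂ) * e ((p : ℝ) ^ k * α)

namespace RS

/-- Additive character on `ℝ⁴`. -/
noncomputable def ch (x : Fin 4 → ℤ) (ξ : Fin 4 → ℝ) : ℂ :=
  e (∑ j, (x j : ℝ) * ξ j)

lemma e_add (x y : ℝ) : e (x + y) = e x * e y := by
  unfold e; rw [← Complex.exp_add]; congr 1; push_cast; ring

lemma e_norm (x : ℝ) : ‖e x‖ = 1 := by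
  unfold e
  rw [show (2 * Real.pi * Complex.I * x : ℂ) = ((2 * Real.pi * x : ℝ) : ℂ) * Complex.I by
    push_cast; ring]
  exact Complex.norm_exp_ofReal_mul_I _

lemma e_conj (x : ℝ) : (starRingEnd ℂ) (e x) = e (-x) := by
  unfold e
  rw [← Complex.exp_conj]; congr 1; simp
  exact Or.inl (map_ofNat _ 2)

lemma e_int (n : ℤ) : e n = 1 := by
  unfold e
  rw [show (2 * Real.pi * Complex.I * ((n : ℝ) : ℂ) : ℂ) = n * (2 * Real.pi * Complex.I) by
    push_cast; ring]
  exact Complex.exp_int_mul_two_pi_mul_I n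

lemma e_re (x : ℝ) : (e x).re = Real.cos (2 * Real.pi * x) := by
  unfold e
  rw [show (2 * Real.pi * Complex.I * x : ℂ) = ((2 * Real.pi * x : ℝ) : ℂ) * Complex.I by
    push_cast; ring]
  exact Complex.exp_ofReal_mul_I_re _

lemma e_cont : Continuous e := by unfold e; fun_prop

lemma int_e (n : ℤ) : ∫ t in Set.Ico (0:ℝ) 1, e ((n : ℝ) * t) = if n = 0 then 1 else 0 := by
  rw [integral_Ico_eq_integral_Ioc, ← intervalIntegral.integral_of_le zero_le_one]
  split_ifs with h
  · subst h; simp [e]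
  · have : ∀ t : ℝ, e ((n : ℝ) * t) = Complex.exp ((2 * Real.pi * Complex.I * n) * t) := by
      intro t; unfold e; congr 1; push_cast; ring
    simp_rw [this]
    rw [integral_exp_mul_complex]
    · have h2 := e_int n
      unfold e at h2
      have h3 : Complex.exp (2 * Real.pi * Complex.I * n * ((1 : ℝ) : ℂ)) = 1 := by
        rw [← h2]; congr 1; push_cast; ring
      rw [h3]; simp
    · have : (n : ℂ) ≠ 0 := by exact_mod_cast h
      simp [this, Real.pi_ne_zero]

lemma e_sum {ι : Type*} (s : Finset ι) (f : ι → ℝ) : e (∑ i ∈ s, f i) = ∏ i ∈ s, e (f i) := by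
  classical
  induction s using Finset.induction_on with
  | empty => simp [e]
  | insert a s ha ih => rw [Finset.sum_insert ha, Finset.prod_insert ha, e_add, ih]

lemma ch_cont (x : Fin 4 → ℤ) : Continuous (ch x) := by
  unfold ch; exact e_cont.comp (by fun_prop)

/-- unit cube -/
def cube : Set (Fin 4 → ℝ) := Set.univ.pi fun _ => Set.Ico 0 1

lemma int_ch (x : Fin 4 → ℤ) : ∫ ξ in cube, ch x ξ = if x = 0 then 1 else 0 := by
  unfold cube ch
  rw [volume_pi, Measure.restrict_pi_pi]
  simp_rw [e_sum]
  rw [integral_fintype_prod_eq_prod (f := fun j t => e ((x j : ℝ) * t))]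
  simp_rw [int_e]
  split_ifs with h
  · subst h; simp
  · obtain ⟨j, hj⟩ := Function.ne_iff.1 h
    apply Finset.prod_eq_zero (Finset.mem_univ j)
    simpa using hj

lemma cube_finite : volume cube < ⊤ := by
  unfold cube; rw [volume_pi_pi]; simp

lemma ch_norm (x ξ) : ‖ch x ξ‖ = 1 := e_norm _

lemma ch_int (x) : IntegrableOn (ch x) cube := by
  refine Measure.integrableOn_of_bounded (M := 1) cube_finite.ne
    (ch_cont x).aestronglyMeasurable ?_
  exact Filter.Eventually.of_forall fun ξ => (ch_norm x ξ).le

lemma T_sq (P : Finset (Fin 4 → ℤ)) (ξ) :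
    ((‖∑ x ∈ P, ch x ξ‖ ^ 2 : ℝ) : ℂ) = ∑ x ∈ P, ∑ y ∈ P, ch (x - y) ξ := by
  rw [← Complex.normSq_eq_norm_sq, ← Complex.mul_conj, map_sum, Finset.sum_mul_sum]
  refine Finset.sum_congr rfl fun x _ => Finset.sum_congr rfl fun y _ => ?_
  unfold ch
  rw [e_conj, ← e_add]; congr 1
  rw [← Finset.sum_neg_distrib, ← Finset.sum_add_distrib]
  refine Finset.sum_congr rfl fun j _ => ?_
  simp; ring

lemma int_T (P : Finset (Fin 4 → ℤ)) :
    ∫ ξ in cube, ‖∑ x ∈ P, ch x ξ‖ ^ 2 = P.card := by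
  have : ((∫ ξ in cube, ‖∑ x ∈ P, ch x ξ‖ ^ 2 : ℝ) : ℂ) = P.card := by
    rw [← integral_complex_ofReal]
    simp_rw [T_sq]
    rw [integral_finsetSum _ (fun x _ => integrable_finsetSum _ (fun y _ => ch_int _))]
    simp_rw [integral_finsetSum _ (fun y _ => ch_int _), int_ch, sub_eq_zero]
    simp
  exact_mod_cast this

lemma lint_T (P : Finset (Fin 4 → ℤ)) :
    ∫⁻ ξ in cube, ENNReal.ofReal (‖∑ x ∈ P, ch x ξ‖ ^ 2) = P.card := by
  rw [← ofReal_integral_eq_lintegral_ofReal, int_T]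
  · simp
  · refine Measure.integrableOn_of_bounded (M := (P.card : ℝ) ^ 2) cube_finite.ne ?_ ?_
    · refine Continuous.aestronglyMeasurable ?_
      exact ((continuous_finsetSum _ fun x _ => ch_cont x).norm).pow 2
    · refine Filter.Eventually.of_forall fun ξ => ?_
      rw [norm_pow, norm_norm]
      gcongr
      refine (norm_sum_le _ _).trans ?_
      simp [ch_norm]
  · exact Filter.Eventually.of_forall fun ξ => by positivity

lemma mem_lat (g : Fin 4 → ℝ) (hg : g ∈ Submodule.span ℤ (Set.range (Pi.basisFun ℝ (Fin 4)))) :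
    ∃ z : Fin 4 → ℤ, g = fun j => (z j : ℝ) := by
  rw [Module.Basis.mem_span_iff_repr_mem] at hg
  choose z hz using hg
  refine ⟨z, ?_⟩
  ext j
  have := hz j
  simp at this
  exact this.symm

lemma ch_periodic (x z : Fin 4 → ℤ) (ξ : Fin 4 → ℝ) : ch x ((fun j => (z j : ℝ)) + ξ) = ch x ξ := by
  unfold ch
  have : ∑ j, (x j : ℝ) * ((fun j => (z j : ℝ)) + ξ) j
      = ((∑ j, x j * z j : ℤ) : ℝ) + ∑ j, (x j : ℝ) * ξ j := by
    push_cast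
    rw [← Finset.sum_add_distrib]
    refine Finset.sum_congr rfl fun j _ => ?_
    simp; ring
  rw [this, e_add, e_int, one_mul]

/-- Duality bound. -/
lemma duality (P H : Finset (Fin 4 → ℤ)) (B : Set (Fin 4 → ℝ)) (hB : MeasurableSet B)
    (hH : ∀ ξ ∈ B, ∀ ξ' ∈ B, ∀ h : Fin 4 → ℤ, (ξ - ξ' = fun j => (h j : ℝ)) → h ∈ H)
    (hP : ∀ x ∈ P, ∀ ξ ∈ B, |∑ j, (x j : ℝ) * ξ j| ≤ 1 / 8) (hfin : volume B ≠ ⊤) :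
    (P.card : ℝ) * (volume B).toReal ≤ 2 * H.card := by
  classical
  set g : (Fin 4 → ℝ) → ENNReal := fun ξ => ENNReal.ofReal (‖∑ x ∈ P, ch x ξ‖ ^ 2) with hg
  have gmeas : Measurable g := by
    have : Continuous fun ξ => ‖∑ x ∈ P, ch x ξ‖ ^ 2 :=
      ((continuous_finsetSum _ fun x _ => ch_cont x).norm).pow 2
    exact this.measurable.ennreal_ofReal
  -- lower bound
  have low : ENNReal.ofReal ((P.card : ℝ) ^ 2 / 2) * volume B ≤ ∫⁻ ξ, B.indicator g ξ := by
    rw [lintegral_indicator hB, ← setLIntegral_const]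
    refine setLIntegral_mono gmeas fun ξ hξ => ?_
    apply ENNReal.ofReal_le_ofReal
    have h1 : (P.card : ℝ) * (√2 / 2) ≤ ‖∑ x ∈ P, ch x ξ‖ := by
      refine le_trans ?_ (Complex.re_le_norm _)
      rw [Complex.re_sum, ← nsmul_eq_mul]
      refine Finset.card_nsmul_le_sum _ _ _ fun x hx => ?_
      unfold ch
      rw [e_re, ← Real.cos_pi_div_four, ← Real.cos_abs (2 * _ * _)]
      apply Real.cos_le_cos_of_nonneg_of_le_pi
      · positivity
      · linarith [Real.pi_pos]
      · rw [abs_mul, abs_of_pos (by positivity : (0:ℝ) < 2 * Real.pi)]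
        nlinarith [hP x hx ξ hξ, Real.pi_pos]
    calc (P.card : ℝ) ^ 2 / 2 = ((P.card : ℝ) * (√2 / 2)) ^ 2 := by
          rw [mul_pow, div_pow, Real.sq_sqrt (by norm_num)]; ring
      _ ≤ _ := by gcongr
  -- upper bound
  have up : ∫⁻ ξ, B.indicator g ξ ≤ H.card * P.card := by
    have fd := ZSpan.isAddFundamentalDomain' (Pi.basisFun ℝ (Fin 4)) volume
    have : Countable (Submodule.span ℤ (Set.range (Pi.basisFun ℝ (Fin 4)))).toAddSubgroup :=
      inferInstanceAs (Countable (Submodule.span ℤ (Set.range (Pi.basisFun ℝ (Fin 4)))))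
    rw [fd.lintegral_eq_tsum'' , ZSpan.fundamentalDomain_pi_basisFun]
    rw [← lintegral_tsum]
    · rw [← lint_T P, ← lintegral_const_mul _ gmeas]
      refine lintegral_mono fun ξ => ?_
      have key : ∀ a : (Submodule.span ℤ (Set.range (Pi.basisFun ℝ (Fin 4)))).toAddSubgroup,
          B.indicator g (a +ᵥ ξ) = B.indicator (fun _ => 1) (a +ᵥ ξ) * g ξ := by
        intro a
        obtain ⟨z, hz⟩ := mem_lat a a.2
        have hv : a +ᵥ ξ = (fun j => (z j : ℝ)) + ξ := by
          rw [← hz]; rfl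
        rw [hv]
        by_cases hb : (fun j => (z j : ℝ)) + ξ ∈ B
        · rw [Set.indicator_of_mem hb, Set.indicator_of_mem hb, one_mul]
          simp only [hg, ch_periodic]
        · rw [Set.indicator_of_notMem hb, Set.indicator_of_notMem hb, zero_mul]
      simp_rw [key]
      rw [ENNReal.tsum_mul_right]
      gcongr
      rw [ENNReal.tsum_eq_iSup_sum]
      refine iSup_le fun s => ?_
      simp only [Set.indicator_apply]
      rw [Finset.sum_boole]
      norm_cast
      rcases (s.filter fun a => a +ᵥ ξ ∈ B).eq_empty_or_nonempty with h0 | ⟨a0, ha0⟩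
      · rw [h0]; simp
      choose z hz using fun a : (Submodule.span ℤ (Set.range (Pi.basisFun ℝ (Fin 4)))).toAddSubgroup =>
        mem_lat a a.2
      refine Finset.card_le_card_of_injOn (fun a => z a - z a0) ?_ ?_
      · intro a ha
        simp only [Finset.coe_filter, Set.mem_ofPred_eq, Finset.mem_filter] at ha ha0
        refine hH _ ha.2 _ ha0.2 _ ?_
        have h1 : a +ᵥ ξ = (fun j => (z a j : ℝ)) + ξ := by rw [← hz]; rfl
        have h2 : a0 +ᵥ ξ = (fun j => (z a0 j : ℝ)) + ξ := by rw [← hz]; rfl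
        rw [h1, h2]; ext j; simp
      · intro a _ b _ hab
        simp only [sub_left_inj] at hab
        ext1
        rw [hz a, hz b, hab]
    · intro a
      exact ((gmeas.indicator hB).comp (measurable_const_vadd a)).aemeasurable
  have := low.trans up
  rcases P.card.eq_zero_or_pos with h0 | h0
  · rw [h0]; simp
  rw [← ENNReal.ofReal_toReal hfin, ← ENNReal.ofReal_mul (by positivity)] at this
  have h3 : ((H.card : ENNReal) * P.card) = ENNReal.ofReal (H.card * P.card) := by
    rw [ENNReal.ofReal_mul (by positivity)]; simp
  rw [h3, ENNReal.ofReal_le_ofReal_iff (by positivity)] at this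
  have hp : (0:ℝ) < P.card := by exact_mod_cast h0
  have h4 : (P.card : ℝ) * ((P.card : ℝ) * (volume B).toReal) ≤ P.card * (2 * H.card) := by
    nlinarith
  exact le_of_mul_le_mul_left h4 hp

end RS

namespace RS

/-- The plank. -/
def Bx (u0 u1 u2 t0 t1 t2 a b t : ℝ) : Set (Fin 4 → ℝ) :=
  {ξ | |ξ 3| ≤ a ∧ |ξ 0 - ξ 3 * u0| ≤ b ∧ |ξ 1 - ξ 3 * u1| ≤ b ∧
    |(ξ 0 - ξ 3 * u0) * t0 + (ξ 1 - ξ 3 * u1) * t1 - (ξ 2 - ξ 3 * u2) * t2| ≤ t}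

lemma Bx_meas (u0 u1 u2 t0 t1 t2 a b t : ℝ) : MeasurableSet (Bx u0 u1 u2 t0 t1 t2 a b t) := by
  refine IsClosed.measurableSet ?_
  have h1 : IsClosed {ξ : Fin 4 → ℝ | |ξ 3| ≤ a} := isClosed_le (by fun_prop) (by fun_prop)
  have h2 : IsClosed {ξ : Fin 4 → ℝ | |ξ 0 - ξ 3 * u0| ≤ b} :=
    isClosed_le (by fun_prop) (by fun_prop)
  have h3 : IsClosed {ξ : Fin 4 → ℝ | |ξ 1 - ξ 3 * u1| ≤ b} :=
    isClosed_le (by fun_prop) (by fun_prop)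
  have h4 : IsClosed {ξ : Fin 4 → ℝ |
      |(ξ 0 - ξ 3 * u0) * t0 + (ξ 1 - ξ 3 * u1) * t1 - (ξ 2 - ξ 3 * u2) * t2| ≤ t} :=
    isClosed_le (by fun_prop) (by fun_prop)
  exact h1.inter (h2.inter (h3.inter h4))

/-- The linear map straightening the plank. -/
noncomputable def BM (u0 u1 u2 t0 t1 t2 : ℝ) : Matrix (Fin 4) (Fin 4) ℝ :=
  !![0, 0, 0, 1; 1, 0, 0, -u0; 0, 1, 0, -u1; t0, t1, -t2, -u0 * t0 - u1 * t1 + u2 * t2]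

lemma Bx_eq (u0 u1 u2 t0 t1 t2 a b t : ℝ) : Bx u0 u1 u2 t0 t1 t2 a b t =
    (Matrix.toLin' (BM u0 u1 u2 t0 t1 t2)) ⁻¹'
      (Set.univ.pi fun j => Set.Icc (-(![a, b, b, t] j)) (![a, b, b, t] j)) := by
  ext ξ
  simp only [Bx, Set.mem_preimage, Set.mem_pi, Set.mem_univ, forall_true_left, Set.mem_Icc,
    ← abs_le, Fin.forall_fin_succ, Set.mem_ofPred_eq]
  simp [BM, Matrix.mulVec, dotProduct, Fin.sum_univ_succ]
  rw [show ξ 0 + -(u0 * ξ 3) = ξ 0 - ξ 3 * u0 by ring,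
    show ξ 1 + -(u1 * ξ 3) = ξ 1 - ξ 3 * u1 by ring]
  rw [show t0 * ξ 0 + (t1 * ξ 1 + (-(t2 * ξ 2) + (-(u0 * t0) - u1 * t1 + u2 * t2) * ξ 3)) =
    (ξ 0 - ξ 3 * u0) * t0 + (ξ 1 - ξ 3 * u1) * t1 - (ξ 2 - ξ 3 * u2) * t2 by ring]
  exact fun _ => Iff.rfl

lemma BM_det (u0 u1 u2 t0 t1 t2 : ℝ) :
    LinearMap.det (Matrix.toLin' (BM u0 u1 u2 t0 t1 t2)) = t2 := by
  rw [LinearMap.det_toLin']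
  simp [BM, Matrix.det_succ_row_zero, Fin.sum_univ_succ, Fin.succAbove]
  ring

lemma Bx_vol (u0 u1 u2 t0 t1 t2 a b t : ℝ) (ht2 : 0 < t2) (ha : 0 ≤ a) (hb : 0 ≤ b) (ht : 0 ≤ t) :
    volume (Bx u0 u1 u2 t0 t1 t2 a b t) = ENNReal.ofReal (16 * a * b ^ 2 * t / t2) := by
  rw [Bx_eq, Measure.addHaar_preimage_linearMap, BM_det, volume_pi_pi]
  · simp only [Real.volume_Icc]
    rw [← ENNReal.ofReal_prod_of_nonneg, ← ENNReal.ofReal_mul (by positivity)]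
    · congr 1
      rw [abs_of_pos (by positivity)]
      simp [Fin.prod_univ_succ]
      field_simp
      ring
    · intro j _
      fin_cases j <;> simp <;> linarith
  · rw [BM_det]; exact ht2.ne'

/-- Lipschitz bound for powers on compact intervals. -/
lemma pow_lip (p lo hi : ℝ) (hlo : 0 < lo) : ∃ K ≥ 1, ∀ a ∈ Set.Icc lo hi, ∀ b ∈ Set.Icc lo hi,
    |b ^ p - a ^ p| ≤ K * |b - a| := by
  have hc : ContinuousOn (fun x : ℝ => p * x ^ (p - 1)) (Set.Icc lo hi) := by
    refine continuousOn_const.mul ?_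
    intro x hx
    exact (Real.continuousAt_rpow_const x _ (Or.inl (hlo.trans_le hx.1).ne')).continuousWithinAt
  obtain ⟨K, hK⟩ := isCompact_Icc.exists_bound_of_continuousOn hc
  refine ⟨max K 1, le_max_right _ _, fun a ha b hb => ?_⟩
  have := (convex_Icc lo hi).norm_image_sub_le_of_norm_hasDerivWithin_le
    (f := fun x : ℝ => x ^ p) (f' := fun x => p * x ^ (p - 1)) (C := max K 1) (x := a) (y := b)
    (fun x hx => (Real.hasDerivAt_rpow_const (Or.inl (hlo.trans_le hx.1).ne')).hasDerivWithinAt)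
    (fun x hx => (hK x hx).trans (le_max_left _ _)) ha hb
  simpa [Real.norm_eq_abs] using this

/-- Second order Taylor bound for powers on compact intervals. -/
lemma pow_taylor (p lo hi : ℝ) (hlo : 0 < lo) : ∃ K ≥ 1, ∀ a ∈ Set.Icc lo hi, ∀ b ∈ Set.Icc lo hi,
    |b ^ p - a ^ p - p * a ^ (p - 1) * (b - a)| ≤ K * (b - a) ^ 2 := by
  obtain ⟨K, hK1, hK⟩ := pow_lip (p - 1) lo hi hlo
  refine ⟨max (|p| * K) 1, le_max_right _ _, fun a ha b hb => ?_⟩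
  have hsub : Set.uIcc a b ⊆ Set.Icc lo hi := Set.uIcc_subset_Icc ha hb
  have := (convex_uIcc a b).norm_image_sub_le_of_norm_hasDerivWithin_le
    (f := fun x : ℝ => x ^ p - p * a ^ (p - 1) * x)
    (f' := fun x => p * x ^ (p - 1) - p * a ^ (p - 1))
    (C := |p| * K * |b - a|) (x := a) (y := b)
    (fun x hx => by
      have h1 := (Real.hasDerivAt_rpow_const (p := p)
        (Or.inl (hlo.trans_le (hsub hx).1).ne' : x ≠ 0 ∨ 1 ≤ p))
      have h2 := (hasDerivAt_id x).const_mul (p * a ^ (p - 1))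
      simp only [mul_one] at h2
      exact (h1.sub h2).hasDerivWithinAt)
    (fun x hx => by
      rw [← mul_sub, norm_mul, Real.norm_eq_abs, Real.norm_eq_abs, mul_assoc]
      gcongr
      refine (hK a ha x (hsub hx)).trans ?_
      exact mul_le_mul_of_nonneg_left (Set.abs_sub_left_of_mem_uIcc hx) (by linarith))
    Set.left_mem_uIcc Set.right_mem_uIcc
  rw [Real.norm_eq_abs, Real.norm_eq_abs, mul_assoc (|p| * K), ← abs_mul, abs_mul_self] at this
  calc _ = |b ^ p - p * a ^ (p - 1) * b - (a ^ p - p * a ^ (p - 1) * a)| := by congr 1; ring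
    _ ≤ _ := this
    _ ≤ _ := by
      rw [← pow_two]; gcongr; exact le_max_left _ _

end RS

namespace RS

lemma abs_bound3 {a b c A B C : ℝ} (ha : |a| ≤ A) (hb : |b| ≤ B) (hc : |c| ≤ C) :
    |a + b - c| ≤ A + B + C := by
  rw [abs_le] at *; constructor <;> linarith [ha.1, ha.2, hb.1, hb.2, hc.1, hc.2]

lemma abs_mul_bound {a b A B : ℝ} (ha : |a| ≤ A) (hb : |b| ≤ B) : |a * b| ≤ A * B := by
  rw [abs_mul]; exact mul_le_mul ha hb (abs_nonneg _) ((abs_nonneg _).trans ha)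

lemma eta2 {R t0 t1 t2 x0 x1 x2 b t : ℝ} (hR : 1 ≤ R) (h0 : t0 ∈ Set.Icc R⁻¹ R)
    (h1 : t1 ∈ Set.Icc R⁻¹ R) (h2 : t2 ∈ Set.Icc R⁻¹ R) (hx0 : |x0| ≤ b) (hx1 : |x1| ≤ b)
    (hx : |x0 * t0 + x1 * t1 - x2 * t2| ≤ t) (htb : t ≤ b) : |x2| ≤ 3 * R ^ 2 * b := by
  have hRp : 0 < R⁻¹ := by positivity
  have hb0 : 0 ≤ b := (abs_nonneg _).trans hx0
  have a0 : |t0| ≤ R := by rw [abs_of_pos (hRp.trans_le h0.1)]; exact h0.2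
  have a1 : |t1| ≤ R := by rw [abs_of_pos (hRp.trans_le h1.1)]; exact h1.2
  have e0 := abs_mul_bound hx0 a0
  have e1 := abs_mul_bound hx1 a1
  have : |x2 * t2| ≤ b * R + b * R + t := by
    have := abs_bound3 e0 e1 hx
    convert this using 2; ring
  have h4 : |x2| * R⁻¹ ≤ |x2 * t2| := by
    rw [abs_mul, abs_of_pos (hRp.trans_le h2.1)]
    exact mul_le_mul_of_nonneg_left h2.1 (abs_nonneg _)
  have h5 : |x2| * R⁻¹ ≤ 3 * R * b := by nlinarith
  calc |x2| = |x2| * R⁻¹ * R := by field_simp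
    _ ≤ 3 * R * b * R := by gcongr
    _ = _ := by ring

lemma inv_lip (p lo hi : ℝ) (hlo : 0 < lo) (hp : 0 < p) : ∃ K ≥ 1, ∀ a ∈ Set.Icc lo hi,
    ∀ b ∈ Set.Icc lo hi, |b - a| ≤ K * |b ^ p - a ^ p| := by
  obtain ⟨K, hK1, hK⟩ := pow_lip (p⁻¹) (lo ^ p) (hi ^ p) (by positivity)
  refine ⟨K, hK1, fun a ha b hb => ?_⟩
  have a0 : 0 < a := hlo.trans_le ha.1
  have b0 : 0 < b := hlo.trans_le hb.1
  have := hK (a ^ p) ⟨Real.rpow_le_rpow hlo.le ha.1 hp.le, Real.rpow_le_rpow a0.le ha.2 hp.le⟩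
    (b ^ p) ⟨Real.rpow_le_rpow hlo.le hb.1 hp.le, Real.rpow_le_rpow b0.le hb.2 hp.le⟩
  rwa [Real.rpow_rpow_inv a0.le hp.ne', Real.rpow_rpow_inv b0.le hp.ne'] at this

set_option maxHeartbeats 1000000 in
lemma cell (k R : ℝ) (hk : 1 < k) (hR : 1 ≤ R) : ∃ c, 0 < c ∧ c ≤ 1 / 2 ∧
    ∀ N σ : ℝ, 1 ≤ N → 0 < σ → σ ≤ 1 → 1 ≤ N * σ →
    ∀ t0 ∈ Set.Icc R⁻¹ R, ∀ t1 ∈ Set.Icc R⁻¹ R, ∀ t2 ∈ Set.Icc R⁻¹ R,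
    ∀ s0 ∈ Set.Icc R⁻¹ R, ∀ s1 ∈ Set.Icc R⁻¹ R, ∀ s2 ∈ Set.Icc R⁻¹ R,
    |t0 ^ k + t1 ^ k - t2 ^ k - 1| ≤ 1 / N ^ 2 → |s0 ^ k + s1 ^ k - s2 ^ k - 1| ≤ 1 / N ^ 2 →
    |s0 - t0| ≤ 1 / (N * σ) → |s1 - t1| ≤ 1 / (N * σ) →
    ∀ ξ ∈ Bx (t0 ^ (k - 1)) (t1 ^ (k - 1)) (t2 ^ (k - 1)) t0 t1 t2 (c * σ ^ 2 * N) (c * σ) (c / N),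
      |s0 * ξ 0 + s1 * ξ 1 - s2 * ξ 2 - ξ 3| ≤ 1 / (16 * N) := by
  have hlo : 0 < R⁻¹ := by positivity
  obtain ⟨L, hL1, hL⟩ := pow_lip k R⁻¹ R hlo
  obtain ⟨L', hL'1, hL'⟩ := inv_lip k R⁻¹ R hlo (by linarith)
  obtain ⟨Q, hQ1, hQ⟩ := pow_taylor k R⁻¹ R hlo
  set K2 := L' * (2 + 2 * L) with hK2
  have hK21 : 1 ≤ K2 := by nlinarith
  set K4 := 2 + 3 * Q * K2 ^ 2 with hK4
  have hK41 : 1 ≤ K4 := by have : 0 ≤ Q * K2 ^ 2 := by positivity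
                           linarith
  set D := 2 + K4 + 5 * K2 * R ^ 2 with hD
  have hD0 : 1 ≤ D := by have : 0 ≤ K2 * R ^ 2 := by positivity
                         linarith
  refine ⟨1 / (16 * D), by positivity, ?_, ?_⟩
  · rw [div_le_div_iff₀ (by positivity) (by norm_num)]; linarith
  intro N σ hN hσ hσ1 hNσ t0 ht0 t1 ht1 t2 ht2 s0 hs0 s1 hs1 s2 hs2 ht hs h0 h1 ξ hξ
  set c := 1 / (16 * D) with hc
  have hc0 : 0 < c := by positivity
  set w := 1 / (N * σ) with hw
  have hN0 : 0 < N := by linarith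
  have hw0 : 0 < w := by positivity
  have hw1 : w ≤ 1 := by rw [hw, div_le_one (by positivity)]; exact hNσ
  have hNw : 1 / N ^ 2 ≤ w ^ 2 := by
    rw [hw, div_pow, one_pow]
    apply one_div_le_one_div_of_le (by positivity)
    gcongr
    nlinarith
  have hww : w ^ 2 ≤ w := by nlinarith
  -- bound for d2
  have hd2 : |s2 - t2| ≤ K2 * w := by
    refine (hL' t2 ht2 s2 hs2).trans ?_
    rw [hK2, mul_assoc]
    gcongr
    have a0 := hL t0 ht0 s0 hs0
    have a1 := hL t1 ht1 s1 hs1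
    have a0' : L * |s0 - t0| ≤ L * w := by gcongr
    have a1' : L * |s1 - t1| ≤ L * w := by gcongr
    have r0 := a0.trans a0'
    have r1 := a1.trans a1'
    rw [abs_le] at r0 r1 ht hs ⊢
    constructor <;> linarith [r0.1, r0.2, r1.1, r1.2, ht.1, ht.2, hs.1, hs.2]
  set u0 := t0 ^ (k - 1) with hu0
  set u1 := t1 ^ (k - 1) with hu1
  set u2 := t2 ^ (k - 1) with hu2
  have hK2w : w ≤ K2 * w := by nlinarith
  have hdv : |(s0 - t0) * u0 + (s1 - t1) * u1 - (s2 - t2) * u2| ≤ K4 * w ^ 2 := by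
    have b0 := hQ t0 ht0 s0 hs0
    have b1 := hQ t1 ht1 s1 hs1
    have b2 := hQ t2 ht2 s2 hs2
    have sq : ∀ d, |d| ≤ K2 * w → Q * d ^ 2 ≤ Q * K2 ^ 2 * w ^ 2 := by
      intro d hd
      rw [mul_assoc, ← mul_pow]
      exact mul_le_mul_of_nonneg_left (sq_le_sq' (abs_le.1 hd).1 (abs_le.1 hd).2) (by linarith)
    have c0 := b0.trans (sq _ (h0.trans hK2w))
    have c1 := b1.trans (sq _ (h1.trans hK2w))
    have c2 := b2.trans (sq _ hd2)
    have key : |k * ((s0 - t0) * u0 + (s1 - t1) * u1 - (s2 - t2) * u2)| ≤ K4 * w ^ 2 := by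
      rw [hK4]
      rw [abs_le] at c0 c1 c2 ht hs ⊢
      constructor <;> linarith [c0.1, c0.2, c1.1, c1.2, c2.1, c2.2, ht.1, ht.2, hs.1, hs.2]
    rw [abs_mul, abs_of_pos (by linarith : 0 < k)] at key
    exact (le_mul_of_one_le_left (abs_nonneg _) hk.le).trans key
  obtain ⟨x3, x0, x1, xt⟩ := hξ
  have hNi : 1 / N ≤ σ := by rw [div_le_iff₀ hN0]; linarith
  have x2 : |ξ 2 - ξ 3 * u2| ≤ 3 * R ^ 2 * (c * σ) := by
    refine eta2 hR ht0 ht1 ht2 x0 x1 xt ?_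
    rw [div_eq_mul_one_div]; gcongr
  have pk : ∀ t ∈ Set.Icc R⁻¹ R, t * t ^ (k - 1) = t ^ k := by
    intro t ht
    have : 0 < t := hlo.trans_le ht.1
    rw [← Real.rpow_one_add' this.le (by linarith)]; congr 1; ring
  have m1 : |t0 * u0 + t1 * u1 - t2 * u2 - 1| ≤ w ^ 2 := by
    rw [hu0, hu1, hu2, pk t0 ht0, pk t1 ht1, pk t2 ht2]; exact ht.trans hNw
  have e1 := abs_mul_bound x3 m1
  have e2 := abs_mul_bound x3 hdv
  have e3 := abs_bound3 (abs_mul_bound h0 x0) (abs_mul_bound h1 x1) (abs_mul_bound hd2 x2)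
  have hσw : σ * w = 1 / N := by rw [hw]; field_simp
  have e4 : c * σ ^ 2 * N * w ^ 2 = c / N := by
    rw [show c * σ ^ 2 * N * w ^ 2 = c * N * (σ * w) ^ 2 by ring, hσw]; field_simp
  have e5 : w * (c * σ) + w * (c * σ) + K2 * w * (3 * R ^ 2 * (c * σ)) =
      (2 + 3 * K2 * R ^ 2) * (c / N) := by
    rw [show w * (c * σ) + w * (c * σ) + K2 * w * (3 * R ^ 2 * (c * σ)) =
      (2 + 3 * K2 * R ^ 2) * c * (σ * w) by ring, hσw]; ring
  rw [e5] at e3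
  have e2' : c * σ ^ 2 * N * (K4 * w ^ 2) = K4 * (c / N) := by rw [← e4]; ring
  rw [e2'] at e2; rw [e4] at e1
  have fin : 1 / (16 * N) = D * (c / N) := by rw [hc]; field_simp
  have hKR : 2 + 3 * K2 * R ^ 2 ≤ 5 * K2 * R ^ 2 := by
    have : 1 ≤ K2 * R ^ 2 := one_le_mul_of_one_le_of_one_le hK21 (one_le_pow₀ hR)
    linarith
  have hcN : 0 < c / N := by positivity
  have e6 : (2 + 3 * K2 * R ^ 2) * (c / N) ≤ 5 * K2 * R ^ 2 * (c / N) := by gcongr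
  rw [fin, hD]
  have id : s0 * ξ 0 + s1 * ξ 1 - s2 * ξ 2 - ξ 3 =
      ξ 3 * (t0 * u0 + t1 * u1 - t2 * u2 - 1)
      + ξ 3 * ((s0 - t0) * u0 + (s1 - t1) * u1 - (s2 - t2) * u2)
      + ((ξ 0 - ξ 3 * u0) * t0 + (ξ 1 - ξ 3 * u1) * t1 - (ξ 2 - ξ 3 * u2) * t2)
      + ((s0 - t0) * (ξ 0 - ξ 3 * u0) + (s1 - t1) * (ξ 1 - ξ 3 * u1)
        - (s2 - t2) * (ξ 2 - ξ 3 * u2)) := by ring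
  rw [id]
  rw [abs_le] at e1 e2 e3 xt ⊢
  constructor <;> linarith [e1.1, e1.2, e2.1, e2.2, e3.1, e3.2, xt.1, xt.2]

set_option maxHeartbeats 1000000 in
lemma dual (k R : ℝ) (hk : 1 < k) (hR : 1 ≤ R) : ∃ σ0, 0 < σ0 ∧ σ0 ≤ 1 ∧
    ∀ N σ : ℝ, 1 ≤ N → 0 < σ → σ ≤ σ0 → 1 ≤ N * σ →
    ∀ t0 ∈ Set.Icc R⁻¹ R, ∀ t1 ∈ Set.Icc R⁻¹ R, ∀ t2 ∈ Set.Icc R⁻¹ R,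
    |t0 ^ k + t1 ^ k - t2 ^ k - 1| ≤ 1 / N ^ 2 →
    ∀ ξ ∈ Bx (t0 ^ (k - 1)) (t1 ^ (k - 1)) (t2 ^ (k - 1)) t0 t1 t2 (σ ^ 2 * N) σ (1 / N),
      |ξ 2 - ξ 3 * t2 ^ (k - 1)| ≤ 3 * R ^ 2 * σ ∧ (1 ≤ ξ 3 →
        0 < ξ 0 ∧ 0 < ξ 1 ∧ 0 < ξ 2 ∧
        |ξ 0 ^ (k / (k - 1)) + ξ 1 ^ (k / (k - 1)) - ξ 2 ^ (k / (k - 1)) - ξ 3 ^ (k / (k - 1))|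
          ≤ ξ 3 ^ (k / (k - 1) - 2)) := by
  have hlo : 0 < R⁻¹ := by positivity
  have hR0 : 0 < R := by linarith
  set κ := k - 1 with hκ
  have hκ0 : 0 < κ := by linarith
  set p := k / κ with hp
  have hp1 : p - 1 = 1 / κ := by rw [hp]; field_simp; rw [hκ]; ring
  have hp0 : 0 < p := by positivity
  set lo := R⁻¹ ^ κ / 2 with hlo'
  have hlo0 : 0 < lo := by positivity
  obtain ⟨Q, hQ1, hQ⟩ := pow_taylor p lo (R ^ κ + lo) hlo0
  set A := 3 * R ^ 2 with hA
  have hA1 : 1 ≤ A := by nlinarith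
  set E := 1 + p + 3 * Q * A ^ 2 with hE
  have hE1 : 1 ≤ E := by
    have : 0 ≤ Q * A ^ 2 := by positivity
    linarith
  refine ⟨min (1 / E) (lo / A), by positivity, ?_, ?_⟩
  · refine (min_le_left _ _).trans ?_
    rw [div_le_one (by linarith)]; exact hE1
  intro N σ hN hσ hσ0 hNσ t0 ht0 t1 ht1 t2 ht2 ht ξ hξ
  have hN0 : 0 < N := by linarith
  have hσE : σ * E ≤ 1 := by
    have := hσ0.trans (min_le_left _ _)
    rwa [le_div_iff₀ (by linarith)] at this
  have hσA : A * σ ≤ lo := by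
    have := hσ0.trans (min_le_right _ _)
    rwa [le_div_iff₀ (by linarith), mul_comm] at this
  have hσ1 : σ ≤ 1 := by nlinarith
  obtain ⟨x3, x0, x1, xt⟩ := hξ
  have hNi : 1 / N ≤ σ := by rw [div_le_iff₀ hN0]; linarith
  have x2 := eta2 hR ht0 ht1 ht2 x0 x1 xt hNi
  refine ⟨x2, fun h3 => ?_⟩
  have h30 : 0 < ξ 3 := by linarith
  have x0' : |ξ 0 - ξ 3 * t0 ^ κ| ≤ A * σ := x0.trans (by nlinarith)
  have x1' : |ξ 1 - ξ 3 * t1 ^ κ| ≤ A * σ := x1.trans (by nlinarith)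
  have gen : ∀ t ∈ Set.Icc R⁻¹ R, ∀ x : ℝ, |x - ξ 3 * t ^ κ| ≤ A * σ → 0 < x ∧
      |x ^ p - ξ 3 ^ p * t ^ k - ξ 3 ^ p * (p * t * ((x - ξ 3 * t ^ κ) / ξ 3))| ≤
        ξ 3 ^ p * (Q * A ^ 2 * σ ^ 2 / ξ 3 ^ 2) := by
    intro t ht x hx
    have t0 : 0 < t := hlo.trans_le ht.1
    have u1 : R⁻¹ ^ κ ≤ t ^ κ := Real.rpow_le_rpow hlo.le ht.1 hκ0.le
    have u2 : t ^ κ ≤ R ^ κ := Real.rpow_le_rpow t0.le ht.2 hκ0.le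
    have hv : |x / ξ 3 - t ^ κ| ≤ A * σ / ξ 3 := by
      rw [le_div_iff₀ h30]
      calc _ = |(x / ξ 3 - t ^ κ) * ξ 3| := by rw [abs_mul, abs_of_pos h30]
        _ = |x - ξ 3 * t ^ κ| := by congr 1; field_simp
        _ ≤ _ := hx
    have hv' : |x / ξ 3 - t ^ κ| ≤ lo := by
      refine hv.trans ((div_le_self (by positivity) h3).trans hσA)
    have hlo2 : R⁻¹ ^ κ = 2 * lo := by rw [hlo']; ring
    have hvl := (abs_le.1 hv').1
    have hvu := (abs_le.1 hv').2
    have hvpos : 0 < x / ξ 3 := by linarith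
    have hx0 : 0 < x := by
      have := mul_pos hvpos h30
      rwa [div_mul_cancel₀ _ h30.ne'] at this
    refine ⟨hx0, ?_⟩
    have := hQ (t ^ κ) ⟨by linarith, by linarith⟩ (x / ξ 3) ⟨by linarith, by linarith⟩
    rw [hp1, ← Real.rpow_mul t0.le, ← Real.rpow_mul t0.le, mul_one_div_cancel hκ0.ne',
      Real.rpow_one, hp, mul_div_cancel₀ _ hκ0.ne', ← hp] at this
    have hsq : (x / ξ 3 - t ^ κ) ^ 2 ≤ (A * σ / ξ 3) ^ 2 := sq_le_sq' (abs_le.1 hv).1 (abs_le.1 hv).2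
    have this2 : |(x / ξ 3) ^ p - t ^ k - p * t * (x / ξ 3 - t ^ κ)| ≤ Q * (A * σ / ξ 3) ^ 2 :=
      this.trans (by gcongr)
    have hpp : 0 < ξ 3 ^ p := by positivity
    have hxp : x ^ p = ξ 3 ^ p * (x / ξ 3) ^ p := by
      rw [← Real.mul_rpow h30.le hvpos.le, mul_div_cancel₀ _ h30.ne']
    calc _ = |ξ 3 ^ p * ((x / ξ 3) ^ p - t ^ k - p * t * (x / ξ 3 - t ^ κ))| := by
          congr 1; rw [hxp]; field_simp
      _ = ξ 3 ^ p * |(x / ξ 3) ^ p - t ^ k - p * t * (x / ξ 3 - t ^ κ)| := by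
          rw [abs_mul, abs_of_pos hpp]
      _ ≤ ξ 3 ^ p * (Q * (A * σ / ξ 3) ^ 2) := by gcongr
      _ = _ := by rw [div_pow, mul_pow]; ring
  obtain ⟨p0, g0⟩ := gen t0 ht0 _ x0'
  obtain ⟨p1, g1⟩ := gen t1 ht1 _ x1'
  obtain ⟨p2, g2⟩ := gen t2 ht2 _ x2
  refine ⟨p0, p1, p2, ?_⟩
  have hpp : 0 < ξ 3 ^ p := by positivity
  have h3N : ξ 3 ≤ σ ^ 2 * N := (le_abs_self _).trans x3
  have hNs : 1 / N ≤ σ ^ 2 / ξ 3 := by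
    rw [div_le_div_iff₀ hN0 h30]; linarith
  have c1 : |ξ 3 ^ p * (t0 ^ k + t1 ^ k - t2 ^ k - 1)| ≤ ξ 3 ^ p * (σ ^ 2 / ξ 3 ^ 2) := by
    rw [abs_mul, abs_of_pos hpp]
    gcongr
    refine ht.trans ?_
    calc 1 / N ^ 2 = (1 / N) ^ 2 := by ring
      _ ≤ (σ ^ 2 / ξ 3) ^ 2 := by gcongr
      _ = σ ^ 2 * σ ^ 2 / ξ 3 ^ 2 := by ring
      _ ≤ σ ^ 2 * 1 / ξ 3 ^ 2 := by gcongr; exact pow_le_one₀ hσ.le hσ1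
      _ = _ := by ring
  have c2 : |ξ 3 ^ p * (p / ξ 3 * ((ξ 0 - ξ 3 * t0 ^ κ) * t0 + (ξ 1 - ξ 3 * t1 ^ κ) * t1
      - (ξ 2 - ξ 3 * t2 ^ κ) * t2))| ≤ ξ 3 ^ p * (p * σ ^ 2 / ξ 3 ^ 2) := by
    rw [abs_mul, abs_of_pos hpp]
    gcongr
    rw [abs_mul, abs_of_pos (by positivity : 0 < p / ξ 3)]
    calc p / ξ 3 * _ ≤ p / ξ 3 * (σ ^ 2 / ξ 3) := by gcongr; exact xt.trans hNs
      _ = _ := by ring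
  have fin : ξ 3 ^ (p - 2) = ξ 3 ^ p / ξ 3 ^ 2 := by
    rw [Real.rpow_sub h30]; norm_num
  have hsum : ξ 3 ^ p * (σ ^ 2 / ξ 3 ^ 2) + ξ 3 ^ p * (p * σ ^ 2 / ξ 3 ^ 2) +
      3 * (ξ 3 ^ p * (Q * A ^ 2 * σ ^ 2 / ξ 3 ^ 2)) ≤ ξ 3 ^ (p - 2) := by
    rw [fin]
    calc _ = ξ 3 ^ p / ξ 3 ^ 2 * (σ * (σ * E)) := by rw [hE]; ring
      _ ≤ ξ 3 ^ p / ξ 3 ^ 2 * 1 := by gcongr; exact mul_le_one₀ hσ1 (by positivity) hσE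
      _ = _ := by ring
  refine le_trans ?_ hsum
  set W := ξ 3 ^ p * (Q * A ^ 2 * σ ^ 2 / ξ 3 ^ 2)
  have id : ξ 0 ^ p + ξ 1 ^ p - ξ 2 ^ p - ξ 3 ^ p =
    (ξ 0 ^ p - ξ 3 ^ p * t0 ^ k - ξ 3 ^ p * (p * t0 * ((ξ 0 - ξ 3 * t0 ^ κ) / ξ 3)))
    + (ξ 1 ^ p - ξ 3 ^ p * t1 ^ k - ξ 3 ^ p * (p * t1 * ((ξ 1 - ξ 3 * t1 ^ κ) / ξ 3)))
    - (ξ 2 ^ p - ξ 3 ^ p * t2 ^ k - ξ 3 ^ p * (p * t2 * ((ξ 2 - ξ 3 * t2 ^ κ) / ξ 3)))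
    + ξ 3 ^ p * (t0 ^ k + t1 ^ k - t2 ^ k - 1)
    + ξ 3 ^ p * (p / ξ 3 * ((ξ 0 - ξ 3 * t0 ^ κ) * t0 + (ξ 1 - ξ 3 * t1 ^ κ) * t1
      - (ξ 2 - ξ 3 * t2 ^ κ) * t2)) := by ring
  rw [id]
  rw [abs_le] at g0 g1 g2 c1 c2 ⊢
  constructor <;> linarith [g0.1, g0.2, g1.1, g1.2, g2.1, g2.2, c1.1, c1.2, c2.1, c2.2]

end RS

namespace RS

/-- Near solutions in a dyadic range, as a finite set. -/
noncomputable def DF (k r : ℝ) (n : ℕ) : Finset (Fin 4 → ℤ) := by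
  classical
  exact (Fintype.piFinset fun _ => Finset.Icc (1 : ℤ) ⌊Real.exp r * 2 ^ (n + 1)⌋).filter fun x =>
    2 ^ n ≤ x 3 ∧ x 3 < 2 ^ (n + 1) ∧
    (∀ j, (x j : ℝ) ≤ Real.exp r * x 3 ∧ (x 3 : ℝ) ≤ Real.exp r * x j) ∧
    |(x 0 : ℝ) ^ k + (x 1 : ℝ) ^ k - (x 2 : ℝ) ^ k - (x 3 : ℝ) ^ k| ≤ (x 3 : ℝ) ^ (k - 2)

lemma mem_DF (k r : ℝ) (n : ℕ) (x : Fin 4 → ℤ) : x ∈ DF k r n ↔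
    (∀ j, 0 < x j) ∧ 2 ^ n ≤ x 3 ∧ x 3 < 2 ^ (n + 1) ∧
    (∀ j, (x j : ℝ) ≤ Real.exp r * x 3 ∧ (x 3 : ℝ) ≤ Real.exp r * x j) ∧
    |(x 0 : ℝ) ^ k + (x 1 : ℝ) ^ k - (x 2 : ℝ) ^ k - (x 3 : ℝ) ^ k| ≤ (x 3 : ℝ) ^ (k - 2) := by
  classical
  unfold DF
  simp only [Finset.mem_filter, Fintype.mem_piFinset, Finset.mem_Icc]
  constructor
  · rintro ⟨h1, h2⟩
    exact ⟨fun j => (h1 j).1, h2⟩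
  · rintro ⟨h1, h2⟩
    refine ⟨fun j => ⟨h1 j, ?_⟩, h2⟩
    rw [Int.le_floor]
    refine (h2.2.2.1 j).1.trans ?_
    have : (x 3 : ℝ) ≤ 2 ^ (n + 1) := by exact_mod_cast h2.2.1.le
    gcongr

lemma DF_card_trivial (k r : ℝ) (n : ℕ) :
    ((DF k r n).card : ℝ) ≤ (Real.exp r * 2 ^ (n + 1)) ^ 4 := by
  classical
  unfold DF
  have h1 := Finset.card_filter_le (Fintype.piFinset fun _ : Fin 4 =>
    Finset.Icc (1 : ℤ) ⌊Real.exp r * 2 ^ (n + 1)⌋) (fun x =>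
    2 ^ n ≤ x 3 ∧ x 3 < 2 ^ (n + 1) ∧
    (∀ j, (x j : ℝ) ≤ Real.exp r * x 3 ∧ (x 3 : ℝ) ≤ Real.exp r * x j) ∧
    |(x 0 : ℝ) ^ k + (x 1 : ℝ) ^ k - (x 2 : ℝ) ^ k - (x 3 : ℝ) ^ k| ≤ (x 3 : ℝ) ^ (k - 2))
  have h2 : (Fintype.piFinset fun _ : Fin 4 =>
    Finset.Icc (1 : ℤ) ⌊Real.exp r * 2 ^ (n + 1)⌋).card = ⌊Real.exp r * 2 ^ (n + 1)⌋.toNat ^ 4 := by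
    simp
  rw [h2] at h1
  have h3 : ((⌊Real.exp r * 2 ^ (n + 1)⌋.toNat : ℕ) : ℝ) ≤ Real.exp r * 2 ^ (n + 1) := by
    have h0 : 0 ≤ ⌊Real.exp r * 2 ^ (n + 1)⌋ := Int.floor_nonneg.2 (by positivity)
    have : ((⌊Real.exp r * 2 ^ (n + 1)⌋.toNat : ℕ) : ℝ) = (⌊Real.exp r * 2 ^ (n + 1)⌋ : ℝ) := by
      exact_mod_cast congrArg (fun z : ℤ => (z : ℝ)) (Int.toNat_of_nonneg h0)
    rw [this]; exact Int.floor_le _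
  calc _ ≤ (((⌊Real.exp r * 2 ^ (n + 1)⌋.toNat) ^ 4 : ℕ) : ℝ) := by exact_mod_cast h1
    _ ≤ _ := by push_cast; gcongr

lemma DF_theta {k r r0 : ℝ} {n : ℕ} {x : Fin 4 → ℤ} (hr : r ≤ r0)
    (hx : x ∈ DF k r n) : (0 : ℝ) < x 3 ∧ (2 : ℝ) ^ n ≤ x 3 ∧ (x 3 : ℝ) ≤ 2 * 2 ^ n ∧
    (∀ j, (x j : ℝ) / x 3 ∈ Set.Icc (Real.exp r0)⁻¹ (Real.exp r0)) ∧
    |((x 0 : ℝ) / x 3) ^ k + ((x 1 : ℝ) / x 3) ^ k - ((x 2 : ℝ) / x 3) ^ k - 1|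
      ≤ 1 / ((2 : ℝ) ^ n) ^ 2 := by
  rw [mem_DF] at hx
  obtain ⟨hpos, h1, h2, h3, h4⟩ := hx
  have hp : ∀ j, (0 : ℝ) < x j := fun j => by exact_mod_cast hpos j
  have h30 := hp 3
  have h1' : (2 : ℝ) ^ n ≤ x 3 := by exact_mod_cast h1
  have hexp : Real.exp r ≤ Real.exp r0 := Real.exp_le_exp.2 hr
  refine ⟨h30, h1', ?_, ?_, ?_⟩
  · have : (x 3 : ℝ) ≤ 2 ^ (n + 1) := by exact_mod_cast h2.le
    rw [pow_succ] at this; linarith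
  · intro j
    refine ⟨?_, ?_⟩
    · rw [le_div_iff₀ h30, inv_mul_le_iff₀ (Real.exp_pos _)]
      refine (h3 j).2.trans ?_
      gcongr
      exact (hp j).le
    · rw [div_le_iff₀ h30]
      refine (h3 j).1.trans ?_
      gcongr
  · have hk : (0 : ℝ) < (x 3 : ℝ) ^ k := by positivity
    have : ((x 0 : ℝ) / x 3) ^ k + ((x 1 : ℝ) / x 3) ^ k - ((x 2 : ℝ) / x 3) ^ k - 1 =
      ((x 0 : ℝ) ^ k + (x 1 : ℝ) ^ k - (x 2 : ℝ) ^ k - (x 3 : ℝ) ^ k) / (x 3 : ℝ) ^ k := by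
      rw [Real.div_rpow (hp 0).le h30.le, Real.div_rpow (hp 1).le h30.le,
        Real.div_rpow (hp 2).le h30.le]
      field_simp
    rw [this, abs_div, abs_of_pos hk, div_le_iff₀ hk]
    refine h4.trans ?_
    rw [Real.rpow_sub h30]
    have : (x 3 : ℝ) ^ (2 : ℝ) = (x 3 : ℝ) ^ 2 := by norm_num
    rw [this, div_eq_mul_one_div, mul_comm]
    gcongr

lemma grid (I : Finset (ℤ × ℤ)) (V : ℝ) (hV : 1 ≤ V)
    (h1 : ∀ i ∈ I, ∀ j ∈ I, |((i.1 : ℝ) - j.1)| ≤ V)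
    (h2 : ∀ i ∈ I, ∀ j ∈ I, |((i.2 : ℝ) - j.2)| ≤ V) : (I.card : ℝ) ≤ 9 * V ^ 2 := by
  rcases I.eq_empty_or_nonempty with h0 | ⟨i0, hi0⟩
  · rw [h0]; simp; positivity
  have hsub : I ⊆ (Finset.Icc (i0.1 - ⌊V⌋) (i0.1 + ⌊V⌋)) ×ˢ
      (Finset.Icc (i0.2 - ⌊V⌋) (i0.2 + ⌊V⌋)) := by
    intro i hi
    have aux : ∀ a b : ℤ, |((a : ℝ) - b)| ≤ V → a ∈ Finset.Icc (b - ⌊V⌋) (b + ⌊V⌋) := by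
      intro a b hab
      have : |a - b| ≤ ⌊V⌋ := by
        rw [Int.le_floor]; push_cast; exact hab
      rw [abs_le] at this
      rw [Finset.mem_Icc]; constructor <;> linarith [this.1, this.2]
    exact Finset.mem_product.2 ⟨aux _ _ (h1 i hi i0 hi0), aux _ _ (h2 i hi i0 hi0)⟩
  have hc := Finset.card_le_card hsub
  rw [Finset.card_product] at hc
  have hcc : ∀ b : ℤ, ((Finset.Icc (b - ⌊V⌋) (b + ⌊V⌋)).card : ℝ) ≤ 3 * V := by
    intro b
    rw [Int.card_Icc]
    have h0 : 0 ≤ ⌊V⌋ := Int.floor_nonneg.2 (by linarith)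
    have : (((b + ⌊V⌋ + 1 - (b - ⌊V⌋)).toNat : ℤ) : ℝ) = 2 * (⌊V⌋ : ℝ) + 1 := by
      rw [Int.toNat_of_nonneg (by linarith)]; push_cast; ring
    have h2 : (((b + ⌊V⌋ + 1 - (b - ⌊V⌋)).toNat : ℕ) : ℝ) = 2 * (⌊V⌋ : ℝ) + 1 := by
      exact_mod_cast this
    rw [h2]; linarith [Int.floor_le V]
  calc (I.card : ℝ) ≤ ((Finset.Icc (i0.1 - ⌊V⌋) (i0.1 + ⌊V⌋)).card : ℝ) *
        ((Finset.Icc (i0.2 - ⌊V⌋) (i0.2 + ⌊V⌋)).card : ℝ) := by exact_mod_cast hc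
    _ ≤ (3 * V) * (3 * V) := by gcongr <;> apply hcc
    _ = _ := by ring

lemma floor_diff (a b : ℝ) : |((⌊a⌋ : ℝ) - ⌊b⌋)| ≤ |a - b| + 1 := by
  have h1 := Int.floor_le a
  have h2 := Int.floor_le b
  have h3 := Int.lt_floor_add_one a
  have h4 := Int.lt_floor_add_one b
  have h5 := le_abs_self (a - b)
  have h6 := neg_abs_le (a - b)
  rw [abs_le]; constructor <;> linarith

lemma floor_eq_diff {a b : ℝ} (h : ⌊a⌋ = ⌊b⌋) : |a - b| ≤ 1 := by
  exact (Int.abs_sub_lt_one_of_floor_eq_floor h).le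

/-- radius sequence -/
noncomputable def rr (r0 : ℝ) (n : ℕ) : ℝ := r0 * (1 + (1 / 2) ^ n)

lemma rr_le (r0 : ℝ) (h : 0 < r0) (n : ℕ) : rr r0 n ≤ 2 * r0 := by
  unfold rr
  have : (1 / 2 : ℝ) ^ n ≤ 1 := pow_le_one₀ (by norm_num) (by norm_num)
  nlinarith

/-- plank attached to a lattice point -/
noncomputable def Pl (k a b t : ℝ) (y : Fin 4 → ℤ) : Set (Fin 4 → ℝ) :=
  Bx (((y 0 : ℝ) / y 3) ^ (k - 1)) (((y 1 : ℝ) / y 3) ^ (k - 1)) (((y 2 : ℝ) / y 3) ^ (k - 1))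
    ((y 0 : ℝ) / y 3) ((y 1 : ℝ) / y 3) ((y 2 : ℝ) / y 3) a b t

lemma Pl_neg {k a b t : ℝ} {y : Fin 4 → ℤ} {ξ : Fin 4 → ℝ} (h : ξ ∈ Pl k a b t y) :
    -ξ ∈ Pl k a b t y := by
  obtain ⟨h1, h2, h3, h4⟩ := h
  refine ⟨?_, ?_, ?_, ?_⟩
  · simpa using h1
  · rw [← abs_neg] at h2; convert h2 using 2; simp; ring
  · rw [← abs_neg] at h3; convert h3 using 2; simp; ring
  · rw [← abs_neg] at h4; convert h4 using 2; simp; ring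

lemma Pl_sub {k a b t : ℝ} {y : Fin 4 → ℤ} {ξ ξ' : Fin 4 → ℝ} (h : ξ ∈ Pl k a b t y)
    (h' : ξ' ∈ Pl k a b t y) : ξ - ξ' ∈ Pl k (2 * a) (2 * b) (2 * t) y := by
  obtain ⟨h1, h2, h3, h4⟩ := h
  obtain ⟨g1, g2, g3, g4⟩ := h'
  have key : ∀ {u v A : ℝ}, |u| ≤ A → |v| ≤ A → |u - v| ≤ 2 * A := by
    intro u v A hu hv
    have := abs_sub u v
    linarith
  refine ⟨?_, ?_, ?_, ?_⟩
  · exact key h1 g1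
  · convert key h2 g2 using 2; simp; ring
  · convert key h3 g3 using 2; simp; ring
  · convert key h4 g4 using 2; simp; ring

lemma Pl_mono {k a b t a' b' t' : ℝ} {y : Fin 4 → ℤ} {ξ : Fin 4 → ℝ} (h : ξ ∈ Pl k a b t y)
    (ha : a ≤ a') (hb : b ≤ b') (ht : t ≤ t') : ξ ∈ Pl k a' b' t' y := by
  obtain ⟨h1, h2, h3, h4⟩ := h
  exact ⟨h1.trans ha, h2.trans hb, h3.trans hb, h4.trans ht⟩

end RS

namespace RS

lemma region {κ r0 a b D : ℝ} {m n : ℕ} (hκ : 0 < κ) (hr0 : 0 < r0) (hmn : m < n)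
    (hb1 : Real.exp (-(κ * rr r0 n)) ≤ b) (hb2 : b ≤ Real.exp (κ * rr r0 n))
    {h : ℝ} (hh : (2 : ℝ) ^ m ≤ h) (ha : |a - h * b| ≤ D)
    (hD : D ≤ Real.exp (-(2 * κ * r0)) * (κ * r0 / 2)) :
    a ≤ Real.exp (κ * rr r0 m) * h ∧ h ≤ Real.exp (κ * rr r0 m) * a := by
  have h2m : (0 : ℝ) < 2 ^ m := by positivity
  have h0 : 0 < h := by linarith
  have hD1 : D ≤ κ * r0 / 2 := by
    refine hD.trans ?_
    have : Real.exp (-(2 * κ * r0)) ≤ 1 := by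
      rw [Real.exp_le_one_iff]
      have : 0 < 2 * κ * r0 := by positivity
      linarith
    have h3 : 0 < κ * r0 / 2 := by positivity
    nlinarith
  set d := (1 / 2 : ℝ) ^ m with hd
  have hdm : 1 ≤ h * d := by
    have : (2 : ℝ) ^ m * d = 1 := by rw [hd, ← mul_pow]; norm_num
    rw [← this]; exact mul_le_mul_of_nonneg_right hh (by positivity)
  have hgap : κ * rr r0 n + κ * r0 * d / 2 ≤ κ * rr r0 m := by
    unfold rr
    have : (1 / 2 : ℝ) ^ n ≤ d / 2 := by
      have h1 : (1 / 2 : ℝ) ^ n ≤ (1 / 2) ^ (m + 1) :=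
        pow_le_pow_of_le_one (by norm_num) (by norm_num) hmn
      rw [pow_succ] at h1; linarith
    have h2 : 0 < κ * r0 := by positivity
    nlinarith
  have hrn : 0 ≤ κ * rr r0 n := by unfold rr; positivity
  have hrm : κ * rr r0 m ≤ 2 * κ * r0 := by
    have := rr_le r0 hr0 m
    nlinarith
  have hd0 : 0 < d := by positivity
  have hkd : 0 < κ * r0 := by positivity
  have e1 : κ * r0 * d / 2 + 1 ≤ Real.exp (κ * rr r0 m - κ * rr r0 n) :=
    (by linarith : κ * r0 * d / 2 + 1 ≤ κ * rr r0 m - κ * rr r0 n + 1).trans (Real.add_one_le_exp _)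
  have e2 : Real.exp (κ * rr r0 n) + κ * r0 / 2 * d ≤ Real.exp (κ * rr r0 m) := by
    have : Real.exp (κ * rr r0 m) = Real.exp (κ * rr r0 n) *
        Real.exp (κ * rr r0 m - κ * rr r0 n) := by rw [← Real.exp_add]; ring_nf
    rw [this]
    have h1 : 1 ≤ Real.exp (κ * rr r0 n) := Real.one_le_exp hrn
    have h2 : 0 < κ * r0 * d / 2 := by positivity
    nlinarith
  have e3 : Real.exp (-(κ * rr r0 m)) + Real.exp (-(2 * κ * r0)) * (κ * r0 / 2) * d ≤
      Real.exp (-(κ * rr r0 n)) := by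
    have : Real.exp (-(κ * rr r0 n)) = Real.exp (-(κ * rr r0 m)) *
        Real.exp (κ * rr r0 m - κ * rr r0 n) := by rw [← Real.exp_add]; ring_nf
    rw [this]
    have h1 : Real.exp (-(2 * κ * r0)) ≤ Real.exp (-(κ * rr r0 m)) :=
      Real.exp_le_exp.2 (by linarith)
    have h2 : 0 < κ * r0 * d / 2 := by positivity
    have h3 := Real.exp_pos (-(κ * rr r0 m))
    nlinarith
  obtain ⟨ha1, ha2⟩ := abs_le.1 ha
  have hDD : 0 ≤ D := (abs_nonneg _).trans ha
  constructor
  · have h1 : h * (Real.exp (κ * rr r0 n) + κ * r0 / 2 * d) ≤ h * Real.exp (κ * rr r0 m) :=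
      mul_le_mul_of_nonneg_left e2 h0.le
    have h2 : h * b ≤ h * Real.exp (κ * rr r0 n) := mul_le_mul_of_nonneg_left hb2 h0.le
    have h3 : κ * r0 / 2 * 1 ≤ κ * r0 / 2 * (h * d) :=
      mul_le_mul_of_nonneg_left hdm (by positivity)
    nlinarith
  · have h1 := mul_le_mul_of_nonneg_left e3 h0.le
    have h2 : h * Real.exp (-(κ * rr r0 n)) ≤ h * b := mul_le_mul_of_nonneg_left hb1 h0.le
    set E := Real.exp (-(2 * κ * r0)) * (κ * r0 / 2) with hE
    have h3 : E * 1 ≤ E * (h * d) := mul_le_mul_of_nonneg_left hdm (by positivity)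
    have h4 : h * Real.exp (-(κ * rr r0 m)) ≤ a := by nlinarith
    rw [Real.exp_neg] at h4
    have h5 := Real.exp_pos (κ * rr r0 m)
    calc h = Real.exp (κ * rr r0 m) * (h * (Real.exp (κ * rr r0 m))⁻¹) := by field_simp
      _ ≤ _ := mul_le_mul_of_nonneg_left h4 h5.le

lemma lat (k r0 : ℝ) (hk : 1 < k) (hr0 : 0 < r0) : ∃ L0 : ℕ, ∀ L ≥ L0, ∀ n ≥ L,
    ∀ y ∈ DF k (rr r0 n) n, ∀ h : Fin 4 → ℤ,
    (fun j => (h j : ℝ)) ∈ Pl k (((1 / 2 : ℝ) ^ L) ^ 2 * 2 ^ n) ((1 / 2) ^ L) (1 / 2 ^ n) y →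
    (h 3 = 0 → h = 0) ∧ (1 ≤ h 3 → ∃ m ∈ Finset.range (n + 1 - 2 * L),
      h ∈ DF (k / (k - 1)) ((k - 1) * rr r0 m) m ∧ (h 3 : ℝ) ≤ ((1 / 2 : ℝ) ^ L) ^ 2 * 2 ^ n) := by
  set R := Real.exp (2 * r0) with hR
  have hR1 : 1 ≤ R := Real.one_le_exp (by positivity)
  have hκ : 0 < k - 1 := by linarith
  obtain ⟨σ0, hσ0, hσ01, hdual⟩ := dual k R hk hR1
  set E := Real.exp (-(2 * (k - 1) * r0)) * ((k - 1) * r0 / 2) with hE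
  have hE0 : 0 < E := by positivity
  have ht : Filter.Tendsto (fun L : ℕ => (1 / 2 : ℝ) ^ L) Filter.atTop (nhds 0) :=
    tendsto_pow_atTop_nhds_zero_of_lt_one (by norm_num) (by norm_num)
  have hev := (ht.eventually (gt_mem_nhds (show (0 : ℝ) < min σ0 (min (1 / (3 * R ^ 2)) (E / (3 * R ^ 2)))
    by positivity))).and (Filter.eventually_ge_atTop 1)
  obtain ⟨L0, hL0⟩ := Filter.eventually_atTop.1 hev
  refine ⟨L0, fun L hL n hn y hy h hh => ?_⟩
  obtain ⟨hs, hL1⟩ := hL0 L hL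
  set σ := (1 / 2 : ℝ) ^ L with hσ
  have hσp : 0 < σ := by positivity
  have hs1 : σ < σ0 := hs.trans_le (min_le_left _ _)
  have hs2 : 3 * R ^ 2 * σ < 1 := by
    have : σ < 1 / (3 * R ^ 2) := hs.trans_le ((min_le_right _ _).trans (min_le_left _ _))
    rw [lt_div_iff₀ (by positivity)] at this; linarith
  have hs3 : 3 * R ^ 2 * σ ≤ E := by
    have : σ < E / (3 * R ^ 2) := hs.trans_le ((min_le_right _ _).trans (min_le_right _ _))
    rw [lt_div_iff₀ (by positivity)] at this; linarith
  have hs4 : σ ≤ 3 * R ^ 2 * σ := by nlinarith [mul_le_mul hR1 hR1 (by norm_num) (by linarith)]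
  set N := (2 : ℝ) ^ n with hN
  have hN1 : 1 ≤ N := one_le_pow₀ (by norm_num)
  have hNσ : 1 ≤ N * σ := by
    have : (2 : ℝ) ^ L * σ = 1 := by rw [hσ, ← mul_pow]; norm_num
    rw [← this]
    exact mul_le_mul_of_nonneg_right (pow_le_pow_right₀ (by norm_num) hn) hσp.le
  obtain ⟨y3, -, -, hθ, hθk⟩ := DF_theta (rr_le r0 hr0 n) hy
  obtain ⟨-, -, -, hθ', -⟩ := DF_theta le_rfl hy
  obtain ⟨hd1, hd2⟩ := hdual N σ hN1 hσp hs1.le hNσ _ (hθ 0) _ (hθ 1) _ (hθ 2) hθk _ hh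
  obtain ⟨g3, g0, g1, -⟩ := hh
  simp only at g3 g0 g1 hd1 hd2
  have G0 := g0.trans hs4
  have G1 := g1.trans hs4
  constructor
  · intro h3
    rw [h3] at G0 G1 hd1
    have key : ∀ a : ℤ, ∀ u : ℝ, |(a : ℝ) - ((0 : ℤ) : ℝ) * u| ≤ 3 * R ^ 2 * σ → a = 0 := by
      intro a u ha
      have : |(a : ℝ)| < 1 := by simpa using ha.trans_lt hs2
      have h2 : |a| < 1 := by exact_mod_cast this
      exact Int.abs_lt_one_iff.1 h2
    ext j
    fin_cases j
    · exact key _ _ G0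
    · exact key _ _ G1
    · exact key _ _ hd1
    · exact h3
  · intro h3
    have h3r : (1 : ℝ) ≤ h 3 := by exact_mod_cast h3
    obtain ⟨p0, p1, p2, htol⟩ := hd2 h3r
    set m := Nat.log 2 (h 3).toNat with hm
    have hz : ((h 3).toNat : ℤ) = h 3 := Int.toNat_of_nonneg (by linarith)
    have hm1 : (2 : ℤ) ^ m ≤ h 3 := by
      rw [← hz]; exact_mod_cast Nat.pow_log_le_self 2 (by omega)
    have hm2 : h 3 < (2 : ℤ) ^ (m + 1) := by
      rw [← hz]; exact_mod_cast Nat.lt_pow_succ_log_self (by norm_num) _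
    have hm1r : (2 : ℝ) ^ m ≤ h 3 := by exact_mod_cast hm1
    have hle : (h 3 : ℝ) ≤ σ ^ 2 * N := (le_abs_self _).trans g3
    have hmn : m + 2 * L ≤ n := by
      have h1 : (2 : ℝ) ^ (m + 2 * L) ≤ 2 ^ n := by
        have : (2 : ℝ) ^ (2 * L) * σ ^ 2 = 1 := by
          rw [hσ, ← pow_mul, mul_comm L 2, ← mul_pow]; norm_num
        calc (2 : ℝ) ^ (m + 2 * L) = 2 ^ (2 * L) * 2 ^ m := by rw [pow_add]; ring
          _ ≤ 2 ^ (2 * L) * (σ ^ 2 * N) :=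
            mul_le_mul_of_nonneg_left (hm1r.trans hle) (by positivity)
          _ = N := by rw [← mul_assoc, this, one_mul]
      exact (pow_le_pow_iff_right₀ (by norm_num)).1 h1
    refine ⟨m, Finset.mem_range.2 (by omega), ?_, hle⟩
    have hb : ∀ j, Real.exp (-((k - 1) * rr r0 n)) ≤ ((y j : ℝ) / y 3) ^ (k - 1) ∧
        ((y j : ℝ) / y 3) ^ (k - 1) ≤ Real.exp ((k - 1) * rr r0 n) := by
      intro j
      have hp : 0 < (y j : ℝ) / y 3 := lt_of_lt_of_le (by positivity) (hθ j).1
      rw [mul_comm, ← neg_mul, Real.exp_mul, Real.exp_mul, Real.exp_neg]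
      exact ⟨Real.rpow_le_rpow (by positivity) (hθ' j).1 hκ.le,
        Real.rpow_le_rpow hp.le (hθ' j).2 hκ.le⟩
    rw [mem_DF]
    refine ⟨?_, hm1, hm2, ?_, htol⟩
    · intro j
      fin_cases j
      · exact_mod_cast p0
      · exact_mod_cast p1
      · exact_mod_cast p2
      · show 0 < h 3
        linarith
    · intro j
      fin_cases j
      · exact region hκ hr0 (by omega) (hb 0).1 (hb 0).2 hm1r G0 hs3
      · exact region hκ hr0 (by omega) (hb 1).1 (hb 1).2 hm1r G1 hs3
      · exact region hκ hr0 (by omega) (hb 2).1 (hb 2).2 hm1r hd1 hs3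
      · have h1 : 1 ≤ Real.exp ((k - 1) * rr r0 m) := Real.one_le_exp (by unfold rr; positivity)
        show (h 3 : ℝ) ≤ _ * (h 3 : ℝ) ∧ (h 3 : ℝ) ≤ _ * (h 3 : ℝ)
        constructor <;> nlinarith

end RS

namespace RS

/-- the cell map -/
noncomputable def phi (A : ℝ) (x : Fin 4 → ℤ) : ℤ × ℤ :=
  (⌊A * ((x 0 : ℝ) / x 3)⌋, ⌊A * ((x 1 : ℝ) / x 3)⌋)

/-- sign flip -/
def flip4 (x : Fin 4 → ℤ) : Fin 4 → ℤ := ![x 0, x 1, -x 2, -x 3]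

lemma flip4_inj : Function.Injective flip4 := by
  intro x y h
  have h0 := congrFun h 0
  have h1 := congrFun h 1
  have h2 := congrFun h 2
  have h3 := congrFun h 3
  simp [flip4] at h0 h1 h2 h3
  ext j
  fin_cases j <;> simpa

open Classical in
lemma cellcount (k r0 : ℝ) (hk : 1 < k) (hr0 : 0 < r0) : ∃ K : ℝ, 0 < K ∧ ∃ L0 : ℕ, ∀ L ≥ L0, ∀ n ≥ L,
    ∀ y ∈ DF k (rr r0 n) n, ∀ Q ⊆ DF k (rr r0 n) n,
    (∀ x ∈ Q, phi (2 ^ n * (1 / 2) ^ L) x = phi (2 ^ n * (1 / 2) ^ L) y) →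
    (Q.card : ℝ) ≤ K / ((1 / 2 : ℝ) ^ L) ^ 4 * (1 + ∑ m ∈ Finset.range (n + 1 - 2 * L),
      (((DF (k / (k - 1)) ((k - 1) * rr r0 m) m).filter fun h =>
        (fun j => (h j : ℝ)) ∈ Pl k (((1 / 2 : ℝ) ^ L) ^ 2 * 2 ^ n) ((1 / 2) ^ L) (1 / 2 ^ n) y).card : ℝ)) := by
  set R := Real.exp (2 * r0) with hR
  have hR1 : 1 ≤ R := Real.one_le_exp (by positivity)
  have hκ : 0 < k - 1 := by linarith
  obtain ⟨c, hc0, hc1, hcell⟩ := cell k R hk hR1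
  obtain ⟨L0, hlat⟩ := lat k r0 hk hr0
  refine ⟨R / (4 * c ^ 4), by positivity, L0, fun L hL n hn y hy Q hQ hQy => ?_⟩
  set σ := (1 / 2 : ℝ) ^ L with hσ
  have hσp : 0 < σ := by positivity
  have hσ1 : σ ≤ 1 := pow_le_one₀ (by norm_num) (by norm_num)
  set N := (2 : ℝ) ^ n with hN
  have hN1 : 1 ≤ N := one_le_pow₀ (by norm_num)
  have hNp : 0 < N := by linarith
  have hNσ : 1 ≤ N * σ := by
    have : (2 : ℝ) ^ L * σ = 1 := by rw [hσ, ← mul_pow]; norm_num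
    rw [← this]
    exact mul_le_mul_of_nonneg_right (pow_le_pow_right₀ (by norm_num) hn) hσp.le
  set S : Finset (Fin 4 → ℤ) := (Finset.range (n + 1 - 2 * L)).biUnion fun m =>
    (DF (k / (k - 1)) ((k - 1) * rr r0 m) m).filter fun h =>
        (fun j => (h j : ℝ)) ∈ Pl k (σ ^ 2 * N) σ (1 / N) y with hS
  obtain ⟨y3, -, -, hθ, hθk⟩ := DF_theta (rr_le r0 hr0 n) hy
  have hlt := hlat L hL n hn y hy
  set H : Finset (Fin 4 → ℤ) := insert 0 (S ∪ S.image fun h => -h) with hH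
  have ht2 : 0 < (y 2 : ℝ) / y 3 := lt_of_lt_of_le (by positivity) (hθ 2).1
  have hvol : volume (Pl k (c * σ ^ 2 * N) (c * σ) (c / N) y) =
      ENNReal.ofReal (16 * (c * σ ^ 2 * N) * (c * σ) ^ 2 * (c / N) / ((y 2 : ℝ) / y 3)) :=
    Bx_vol _ _ _ _ _ _ _ _ _ ht2 (by positivity) (by positivity) (by positivity)
  have hdu := duality (Q.image flip4) H (Pl k (c * σ ^ 2 * N) (c * σ) (c / N) y) (Bx_meas _ _ _ _ _ _ _ _ _)
    (by
      intro ξ hξ ξ' hξ' h hh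
      have h1 := Pl_sub hξ hξ'
      rw [hh] at h1
      have h2 : (fun j => (h j : ℝ)) ∈ Pl k (σ ^ 2 * N) σ (1 / N) y := by
        refine Pl_mono h1 ?_ ?_ ?_
        · have : 0 < σ ^ 2 * N := by positivity
          nlinarith
        · nlinarith
        · rw [← mul_div_assoc]; gcongr; linarith
      obtain ⟨a1, a2⟩ := hlt h h2
      rcases lt_trichotomy (h 3) 0 with h3 | h3 | h3
      · have h4' : (fun j => (((-h) j : ℤ) : ℝ)) ∈ Pl k (σ ^ 2 * N) σ (1 / N) y := by
          convert Pl_neg h2 using 1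
          ext j; simp
        obtain ⟨m, hm, hm2, -⟩ := (hlt (-h) h4').2 (by simp; linarith)
        refine Finset.mem_insert_of_mem (Finset.mem_union_right _ (Finset.mem_image.2 ⟨-h, ?_, by simp⟩))
        exact Finset.mem_biUnion.2 ⟨m, hm, Finset.mem_filter.2 ⟨hm2, h4'⟩⟩
      · rw [a1 h3]; exact Finset.mem_insert_self _ _
      · obtain ⟨m, hm, hm2, -⟩ := a2 h3
        refine Finset.mem_insert_of_mem (Finset.mem_union_left _ ?_)
        exact Finset.mem_biUnion.2 ⟨m, hm, Finset.mem_filter.2 ⟨hm2, h2⟩⟩)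
    (by
      intro x' hx' ξ hξ
      obtain ⟨x, hx, rfl⟩ := Finset.mem_image.1 hx'
      obtain ⟨x3, -, x3N, hs, hsk⟩ := DF_theta (rr_le r0 hr0 n) (hQ hx)
      have hphi := hQy x hx
      simp only [phi, Prod.mk.injEq] at hphi
      have hdiff : ∀ a b : ℝ, ⌊N * σ * a⌋ = ⌊N * σ * b⌋ → |a - b| ≤ 1 / (N * σ) := by
        intro a b hab
        have h1 := floor_eq_diff hab
        rw [← mul_sub, abs_mul, abs_of_pos (by positivity : 0 < N * σ)] at h1
        rw [le_div_iff₀ (by positivity)]; linarith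
      have h1 := hcell N σ hN1 hσp hσ1 hNσ _ (hθ 0) _ (hθ 1) _ (hθ 2) _ (hs 0) _ (hs 1) _ (hs 2)
        hθk hsk (hdiff _ _ hphi.1) (hdiff _ _ hphi.2) ξ hξ
      have h2 : ∑ j, (flip4 x j : ℝ) * ξ j = x 3 * ((x 0 : ℝ) / x 3 * ξ 0 + (x 1 : ℝ) / x 3 * ξ 1 -
          (x 2 : ℝ) / x 3 * ξ 2 - ξ 3) := by
        simp [Fin.sum_univ_four, flip4]
        field_simp
        ring
      rw [h2, abs_mul, abs_of_pos x3]
      calc (x 3 : ℝ) * _ ≤ 2 * N * (1 / (16 * N)) := mul_le_mul x3N h1 (abs_nonneg _) (by positivity)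
        _ = 1 / 8 := by field_simp; norm_num)
    (by rw [hvol]; exact ENNReal.ofReal_ne_top)
  rw [Finset.card_image_of_injective _ flip4_inj, hvol, ENNReal.toReal_ofReal (by positivity)] at hdu
  have hHc : (H.card : ℝ) ≤ 2 * (1 + ∑ m ∈ Finset.range (n + 1 - 2 * L),
      (((DF (k / (k - 1)) ((k - 1) * rr r0 m) m).filter fun h =>
        (fun j => (h j : ℝ)) ∈ Pl k (σ ^ 2 * N) σ (1 / N) y).card : ℝ)) := by
    have h1 : H.card ≤ S.card + S.card + 1 :=
      (Finset.card_insert_le _ _).trans (by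
        have := Finset.card_union_le S (S.image fun h => -h)
        have h2 := Finset.card_image_le (s := S) (f := fun h => -h)
        omega)
    have h2 : S.card ≤ _ := Finset.card_biUnion_le
    have h2' := (Nat.cast_le (α := ℝ)).2 h2
    have h1' := (Nat.cast_le (α := ℝ)).2 h1
    push_cast at h1' h2'
    linarith
  set Z := (1 + ∑ m ∈ Finset.range (n + 1 - 2 * L),
      (((DF (k / (k - 1)) ((k - 1) * rr r0 m) m).filter fun h =>
        (fun j => (h j : ℝ)) ∈ Pl k (σ ^ 2 * N) σ (1 / N) y).card : ℝ)) with hZ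
  have h5 : 16 * c ^ 4 * σ ^ 4 / R ≤
      16 * (c * σ ^ 2 * N) * (c * σ) ^ 2 * (c / N) / ((y 2 : ℝ) / y 3) := by
    have : 16 * (c * σ ^ 2 * N) * (c * σ) ^ 2 * (c / N) = 16 * c ^ 4 * σ ^ 4 := by
      field_simp
    rw [this]
    exact div_le_div_of_nonneg_left (by positivity) ht2 (hθ 2).2
  have h6 : (Q.card : ℝ) * (16 * c ^ 4 * σ ^ 4 / R) ≤ 4 * Z := by
    refine (mul_le_mul_of_nonneg_left h5 (by positivity)).trans (hdu.trans ?_)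
    linarith
  rw [← le_div_iff₀ (by positivity)] at h6
  refine h6.trans (le_of_eq ?_)
  field_simp
  ring

open Classical in
lemma mult (k r0 : ℝ) (hk : 1 < k) (hr0 : 0 < r0) : ∃ M : ℝ, 0 < M ∧ ∀ L n : ℕ,
    ∀ Y ⊆ DF k (rr r0 n) n, Set.InjOn (phi (2 ^ n * (1 / 2) ^ L)) Y →
    ∀ m : ℕ, ∀ h : Fin 4 → ℤ, (2 : ℝ) ^ m ≤ h 3 →
    (∀ y ∈ Y, (fun j => (h j : ℝ)) ∈ Pl k (((1 / 2 : ℝ) ^ L) ^ 2 * 2 ^ n) ((1 / 2) ^ L) (1 / 2 ^ n) y) →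
    (Y.card : ℝ) ≤ M * (((1 / 2 : ℝ) ^ L) ^ 4 * 4 ^ n / 4 ^ m) := by
  set R := Real.exp (2 * r0) with hR
  have hR1 : 1 ≤ R := Real.one_le_exp (by positivity)
  have hκ : 0 < k - 1 := by linarith
  obtain ⟨J, hJ1, hJ⟩ := inv_lip (k - 1) R⁻¹ R (by positivity) hκ
  refine ⟨9 * (2 * J + 1) ^ 2, by positivity, fun L n Y hY hinj m h hm hh => ?_⟩
  set σ := (1 / 2 : ℝ) ^ L with hσ
  have hσp : 0 < σ := by positivity
  set N := (2 : ℝ) ^ n with hN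
  have hNp : 0 < N := by positivity
  rcases Y.eq_empty_or_nonempty with h0 | ⟨y0, hy0⟩
  · rw [h0]; simp; positivity
  have h3p : 0 < (h 3 : ℝ) := lt_of_lt_of_le (by positivity) hm
  have h3N : (h 3 : ℝ) ≤ σ ^ 2 * N := (le_abs_self _).trans (hh y0 hy0).1
  rw [← Finset.card_image_of_injOn hinj]
  have hQ : 1 ≤ N * σ ^ 2 / h 3 := by rw [le_div_iff₀ h3p]; linarith
  have key : ∀ a ∈ Set.Icc R⁻¹ R, ∀ b ∈ Set.Icc R⁻¹ R, ∀ u : ℝ, |u - h 3 * a ^ (k - 1)| ≤ σ →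
      |u - h 3 * b ^ (k - 1)| ≤ σ → |((⌊N * σ * a⌋ : ℝ) - ⌊N * σ * b⌋)| ≤
        (2 * J + 1) * (N * σ ^ 2 / h 3) := by
    intro a ha b hb u hua hub
    refine (floor_diff _ _).trans ?_
    have h1 := hJ b hb a ha
    have h2 : |a ^ (k - 1) - b ^ (k - 1)| ≤ 2 * σ / h 3 := by
      rw [le_div_iff₀ h3p]
      have h4 : |a ^ (k - 1) - b ^ (k - 1)| * h 3 =
          |(u - h 3 * b ^ (k - 1)) - (u - h 3 * a ^ (k - 1))| := by
        rw [← abs_of_pos h3p, ← abs_mul, abs_of_pos h3p]; congr 1; ring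
      rw [h4]
      have := abs_sub (u - h 3 * b ^ (k - 1)) (u - h 3 * a ^ (k - 1))
      linarith
    rw [← mul_sub, abs_mul, abs_of_pos (by positivity : 0 < N * σ)]
    have h5 : |a - b| ≤ J * (2 * σ / h 3) := h1.trans (mul_le_mul_of_nonneg_left h2 (by linarith))
    have h6 := mul_le_mul_of_nonneg_left h5 (by positivity : 0 ≤ N * σ)
    have h7 : N * σ * (J * (2 * σ / h 3)) = 2 * J * (N * σ ^ 2 / h 3) := by ring
    linarith
  have g := grid (Y.image (phi (N * σ))) ((2 * J + 1) * (N * σ ^ 2 / h 3)) (by nlinarith)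
    (by
      intro i hi j hj
      obtain ⟨x, hx, rfl⟩ := Finset.mem_image.1 hi
      obtain ⟨y, hy, rfl⟩ := Finset.mem_image.1 hj
      obtain ⟨-, -, -, hs, -⟩ := DF_theta (rr_le r0 hr0 n) (hY hx)
      obtain ⟨-, -, -, ht, -⟩ := DF_theta (rr_le r0 hr0 n) (hY hy)
      exact key _ (hs 0) _ (ht 0) _ (hh x hx).2.1 (hh y hy).2.1)
    (by
      intro i hi j hj
      obtain ⟨x, hx, rfl⟩ := Finset.mem_image.1 hi
      obtain ⟨y, hy, rfl⟩ := Finset.mem_image.1 hj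
      obtain ⟨-, -, -, hs, -⟩ := DF_theta (rr_le r0 hr0 n) (hY hx)
      obtain ⟨-, -, -, ht, -⟩ := DF_theta (rr_le r0 hr0 n) (hY hy)
      exact key _ (hs 1) _ (ht 1) _ (hh x hx).2.2.1 (hh y hy).2.2.1)
  refine g.trans ?_
  have h4n : (4 : ℝ) ^ n = N ^ 2 := by rw [hN, ← pow_mul, mul_comm, pow_mul]; norm_num
  have h4m : (4 : ℝ) ^ m ≤ (h 3 : ℝ) ^ 2 := by
    have : (4 : ℝ) ^ m = (2 ^ m) ^ 2 := by rw [← pow_mul, mul_comm, pow_mul]; norm_num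
    rw [this]; exact pow_le_pow_left₀ (by positivity) hm 2
  rw [mul_pow, ← mul_assoc, h4n]
  refine mul_le_mul_of_nonneg_left ?_ (by positivity)
  rw [div_pow, show (N * σ ^ 2) ^ 2 = σ ^ 4 * N ^ 2 by ring]
  exact div_le_div_of_nonneg_left (by positivity) (by positivity) h4m

end RS

namespace RS

set_option maxHeartbeats 1000000 in
lemma step_big (k r0 : ℝ) (hk : 1 < k) (hr0 : 0 < r0) : ∃ K : ℝ, 0 < K ∧ ∃ L0 : ℕ, ∀ L ≥ L0, ∀ n ≥ L,
    ((DF k (rr r0 n) n).card : ℝ) ≤ K * 4 ^ n * (4 ^ L + ∑ m ∈ Finset.range (n + 1 - 2 * L),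
      ((DF (k / (k - 1)) ((k - 1) * rr r0 m) m).card : ℝ) / 4 ^ m) := by
  classical
  set R := Real.exp (2 * r0) with hR
  have hR1 : 1 ≤ R := Real.one_le_exp (by positivity)
  obtain ⟨K, hK, L0, hcell⟩ := cellcount k r0 hk hr0
  obtain ⟨M, hM, hmult⟩ := mult k r0 hk hr0
  refine ⟨K * (36 * R ^ 2 + M), by positivity, L0, fun L hL n hn => ?_⟩
  have hcell' := hcell L hL n hn
  set σ := (1 / 2 : ℝ) ^ L with hσ
  have hσp : 0 < σ := by positivity
  set N := (2 : ℝ) ^ n with hN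
  have hN1 : 1 ≤ N := one_le_pow₀ (by norm_num)
  have hNp : 0 < N := by linarith
  have hLσ : (2 : ℝ) ^ L * σ = 1 := by rw [hσ, ← mul_pow]; norm_num
  have h4L : (4 : ℝ) ^ L = 1 / σ ^ 2 := by
    have : (4 : ℝ) ^ L = (2 ^ L) ^ 2 := by rw [← pow_mul, mul_comm, pow_mul]; norm_num
    rw [this, eq_div_iff (by positivity), ← mul_pow, hLσ, one_pow]
  have h4n : (4 : ℝ) ^ n = N ^ 2 := by rw [hN, ← pow_mul, mul_comm, pow_mul]; norm_num
  have hNσ : 1 ≤ N * σ := by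
    rw [← hLσ]
    exact mul_le_mul_of_nonneg_right (pow_le_pow_right₀ (by norm_num) hn) hσp.le
  set P := DF k (rr r0 n) n with hP
  set f := phi (N * σ) with hf
  obtain ⟨Y, hYP, hinj, himg⟩ := Finset.exists_subset_injOn_image_eq_of_surjOn (P : Set (Fin 4 → ℤ))
    (P.image f) (f := f) (by rw [Finset.coe_image]; exact Set.surjOn_image _ _)
  have hYP' : Y ⊆ P := by exact_mod_cast hYP
  have hsum : (P.card : ℝ) = ∑ y ∈ Y, ((P.filter fun x => f x = f y).card : ℝ) := by
    have h1 := Finset.card_eq_sum_card_image f P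
    rw [← himg, Finset.sum_image hinj] at h1
    exact_mod_cast h1
  have hYc : (Y.card : ℝ) ≤ 36 * R ^ 2 * (N * σ) ^ 2 := by
    rw [← Finset.card_image_of_injOn hinj]
    have key : ∀ a ∈ Set.Icc R⁻¹ R, ∀ b ∈ Set.Icc R⁻¹ R,
        |((⌊N * σ * a⌋ : ℝ) - ⌊N * σ * b⌋)| ≤ 2 * R * (N * σ) := by
      intro a ha b hb
      refine (floor_diff _ _).trans ?_
      have hi : 0 < R⁻¹ := by positivity
      have h1 : |a - b| ≤ R := by
        rw [abs_le]; constructor <;> linarith [ha.1, ha.2, hb.1, hb.2]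
      rw [← mul_sub, abs_mul, abs_of_pos (by positivity : 0 < N * σ)]
      have h2 := mul_le_mul_of_nonneg_left h1 (by positivity : 0 ≤ N * σ)
      nlinarith
    have g := grid (Y.image f) (2 * R * (N * σ)) (by nlinarith)
      (by
        intro i hi j hj
        obtain ⟨x, hx, rfl⟩ := Finset.mem_image.1 hi
        obtain ⟨y, hy, rfl⟩ := Finset.mem_image.1 hj
        obtain ⟨-, -, -, hs, -⟩ := DF_theta (rr_le r0 hr0 n) (hYP' hx)
        obtain ⟨-, -, -, ht, -⟩ := DF_theta (rr_le r0 hr0 n) (hYP' hy)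
        exact key _ (hs 0) _ (ht 0))
      (by
        intro i hi j hj
        obtain ⟨x, hx, rfl⟩ := Finset.mem_image.1 hi
        obtain ⟨y, hy, rfl⟩ := Finset.mem_image.1 hj
        obtain ⟨-, -, -, hs, -⟩ := DF_theta (rr_le r0 hr0 n) (hYP' hx)
        obtain ⟨-, -, -, ht, -⟩ := DF_theta (rr_le r0 hr0 n) (hYP' hy)
        exact key _ (hs 1) _ (ht 1))
    refine g.trans (le_of_eq (by ring))
  set r : (Fin 4 → ℤ) → (Fin 4 → ℤ) → Prop := fun y h =>
    (fun j => (h j : ℝ)) ∈ Pl k (σ ^ 2 * N) σ (1 / N) y with hr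
  set D : ℕ → Finset (Fin 4 → ℤ) := fun m => DF (k / (k - 1)) ((k - 1) * rr r0 m) m with hD
  have hA : ∀ m, ∑ y ∈ Y, (((D m).filter fun h => r y h).card : ℝ) ≤
      M * (σ ^ 4 * 4 ^ n) * ((D m).card / 4 ^ m) := by
    intro m
    have h1 : ∑ y ∈ Y, ((D m).filter fun h => r y h).card =
        ∑ h ∈ D m, (Y.filter fun y => r y h).card :=
      Finset.sum_card_bipartiteAbove_eq_sum_card_bipartiteBelow r
    have h2 : ∑ y ∈ Y, (((D m).filter fun h => r y h).card : ℝ) =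
        ∑ h ∈ D m, ((Y.filter fun y => r y h).card : ℝ) := by exact_mod_cast h1
    rw [h2]
    have h3 : ∀ h ∈ D m, ((Y.filter fun y => r y h).card : ℝ) ≤ M * (σ ^ 4 * 4 ^ n / 4 ^ m) := by
      intro h hh
      refine hmult L n _ ((Finset.filter_subset _ _).trans hYP')
        (hinj.mono (by exact_mod_cast Finset.filter_subset _ _)) m h ?_ ?_
      · have := ((mem_DF _ _ _ _).1 hh).2.1
        exact_mod_cast this
      · intro y hy
        exact (Finset.mem_filter.1 hy).2
    refine (Finset.sum_le_card_nsmul _ _ _ h3).trans (le_of_eq ?_)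
    rw [nsmul_eq_mul]; ring
  have hB : ∀ y ∈ Y, ((P.filter fun x => f x = f y).card : ℝ) ≤
      K / σ ^ 4 * (1 + ∑ m ∈ Finset.range (n + 1 - 2 * L), (((D m).filter fun h => r y h).card : ℝ)) := by
    intro y hy
    have := hcell' y (hYP' hy) (P.filter fun x => f x = f y) (Finset.filter_subset _ _)
      (fun x hx => (Finset.mem_filter.1 hx).2)
    convert this using 5
  rw [hsum]
  refine (Finset.sum_le_sum hB).trans ?_
  rw [← Finset.mul_sum, Finset.sum_add_distrib, Finset.sum_comm, Finset.sum_const, nsmul_eq_mul, mul_one]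
  have hC : ∑ m ∈ Finset.range (n + 1 - 2 * L), ∑ y ∈ Y, (((D m).filter fun h => r y h).card : ℝ) ≤
      M * (σ ^ 4 * 4 ^ n) * ∑ m ∈ Finset.range (n + 1 - 2 * L), ((D m).card : ℝ) / 4 ^ m := by
    rw [Finset.mul_sum]
    exact Finset.sum_le_sum fun m _ => hA m
  set Z := ∑ m ∈ Finset.range (n + 1 - 2 * L), ((D m).card : ℝ) / 4 ^ m with hZ
  have hZ0 : 0 ≤ Z := Finset.sum_nonneg fun m _ => by positivity
  refine (mul_le_mul_of_nonneg_left (add_le_add hYc hC) (by positivity)).trans ?_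
  rw [h4L, h4n]
  clear_value Z N R σ
  clear hZ hC hB hA hsum hYc himg hinj hcell hcell' hmult
  have e1 : K / σ ^ 4 * (36 * R ^ 2 * (N * σ) ^ 2 + M * (σ ^ 4 * N ^ 2) * Z) =
      K * N ^ 2 * (36 * R ^ 2 * (1 / σ ^ 2) + M * Z) := by
    field_simp
  rw [e1]
  have h1 : 0 ≤ 1 / σ ^ 2 := by positivity
  have h2 : 36 * R ^ 2 * (1 / σ ^ 2) + M * Z ≤ (36 * R ^ 2 + M) * (1 / σ ^ 2 + Z) := by
    have : 0 ≤ 36 * R ^ 2 * Z := by positivity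
    have : 0 ≤ M * (1 / σ ^ 2) := by positivity
    nlinarith
  calc _ ≤ K * N ^ 2 * ((36 * R ^ 2 + M) * (1 / σ ^ 2 + Z)) :=
        mul_le_mul_of_nonneg_left h2 (by positivity)
    _ = _ := by ring

set_option maxHeartbeats 1000000 in
lemma step (k r0 : ℝ) (hk : 1 < k) (hr0 : 0 < r0) : ∃ K : ℝ, 0 < K ∧ ∃ L0 : ℕ, ∀ L ≥ L0, ∀ n : ℕ,
    ((DF k (rr r0 n) n).card : ℝ) / 4 ^ n ≤ K * (4 ^ L + ∑ m ∈ Finset.range (n + 1 - 2 * L),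
      ((DF (k / (k - 1)) ((k - 1) * rr r0 m) m).card : ℝ) / 4 ^ m) := by
  set R := Real.exp (2 * r0) with hR
  have hR1 : 1 ≤ R := Real.one_le_exp (by positivity)
  obtain ⟨K, hK, L0, h⟩ := step_big k r0 hk hr0
  refine ⟨K + 16 * R ^ 4, by positivity, L0, fun L hL n => ?_⟩
  rw [div_le_iff₀ (by positivity)]
  set Z := ∑ m ∈ Finset.range (n + 1 - 2 * L),
      ((DF (k / (k - 1)) ((k - 1) * rr r0 m) m).card : ℝ) / 4 ^ m with hZ
  have hZ0 : 0 ≤ Z := Finset.sum_nonneg fun m _ => by positivity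
  have h' := h L hL n
  rw [← hZ] at h'
  clear_value Z R
  rcases le_or_gt L n with hn | hn
  · refine (h' hn).trans ?_
    have e : (K + 16 * R ^ 4) * (4 ^ L + Z) * 4 ^ n = K * 4 ^ n * (4 ^ L + Z) +
      16 * R ^ 4 * 4 ^ n * (4 ^ L + Z) := by ring
    rw [e]
    have : 0 ≤ 16 * R ^ 4 * 4 ^ n * (4 ^ L + Z) := by positivity
    linarith
  · have h1 := DF_card_trivial k (rr r0 n) n
    have h2 : Real.exp (rr r0 n) ≤ R := by rw [hR]; exact Real.exp_le_exp.2 (rr_le r0 hr0 n)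
    have h3 : (4 : ℝ) ^ n ≤ 4 ^ L := pow_le_pow_right₀ (by norm_num) hn.le
    have h4n : (4 : ℝ) ^ n = (2 ^ n) ^ 2 := by rw [← pow_mul, mul_comm, pow_mul]; norm_num
    calc _ ≤ (Real.exp (rr r0 n) * 2 ^ (n + 1)) ^ 4 := h1
      _ ≤ (R * 2 ^ (n + 1)) ^ 4 := by gcongr
      _ = 16 * R ^ 4 * (4 ^ n) * 4 ^ n := by rw [h4n, pow_succ]; ring
      _ ≤ (K + 16 * R ^ 4) * (4 ^ L + Z) * 4 ^ n := by
        refine mul_le_mul_of_nonneg_right ?_ (by positivity)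
        refine mul_le_mul (by linarith) (by linarith) (by positivity) (by positivity)

/-- real-sequence induction -/
lemma induct (b : ℕ → ℝ) (K : ℝ) (hK : 0 < K) (L0 : ℕ)
    (h : ∀ L ≥ L0, ∀ n, b n ≤ K * (4 ^ L + ∑ m ∈ Finset.range (n + 1 - 2 * L), b m))
    (q : ℝ) (hq : 1 < q) : ∃ A : ℝ, 0 < A ∧ ∀ n, b n ≤ A * q ^ n := by
  -- choose L with K * q / (q - 1) * q^(-2L) small
  obtain ⟨L1, hL1⟩ := pow_unbounded_of_one_lt (2 * K * q / (q - 1)) hq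
  set L := max L0 (L1 + 1) with hL
  have hq0 : 0 < q - 1 := by linarith
  have hqL : 2 * K * q ≤ q ^ (2 * L) * (q - 1) := by
    rw [← div_le_iff₀ hq0]
    refine hL1.le.trans (pow_le_pow_right₀ hq.le ?_)
    have := le_max_right L0 (L1 + 1)
    omega
  refine ⟨2 * K * 4 ^ L, by positivity, fun n => ?_⟩
  induction n using Nat.strong_induction_on with
  | _ n ih =>
  have hLpos : 1 ≤ L := le_trans (by omega) (le_max_right L0 (L1 + 1))
  refine (h L (le_max_left _ _) n).trans ?_
  have hqn : 1 ≤ q ^ n := one_le_pow₀ hq.le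
  have h1 : ∑ m ∈ Finset.range (n + 1 - 2 * L), b m ≤
      2 * K * 4 ^ L * ∑ m ∈ Finset.range (n + 1 - 2 * L), q ^ m := by
    rw [Finset.mul_sum]
    refine Finset.sum_le_sum fun m hm => ih m ?_
    have := Finset.mem_range.1 hm
    omega
  have h2 : K * ∑ m ∈ Finset.range (n + 1 - 2 * L), q ^ m ≤ q ^ n / 2 := by
    rcases le_or_gt (2 * L) n with hn | hn
    · rw [geom_sum_eq (by linarith)]
      have e : q ^ n = q ^ (n - 2 * L) * q ^ (2 * L) := by rw [← pow_add]; congr 1; omega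
      have e2 : n + 1 - 2 * L = (n - 2 * L) + 1 := by omega
      rw [e2, e, pow_succ, ← mul_div_assoc, div_le_iff₀ hq0]
      have h3 : 0 < q ^ (n - 2 * L) := by positivity
      nlinarith
    · have : n + 1 - 2 * L = 0 := by omega
      rw [this]; simp; positivity
  have h4 := mul_le_mul_of_nonneg_left h1 hK.le
  have h5 := mul_le_mul_of_nonneg_left h2 (by positivity : 0 ≤ 2 * K * 4 ^ L)
  have h6 : 0 < K * 4 ^ L := by positivity
  nlinarith

lemma DF_bound (k r0 : ℝ) (hk : 1 < k) (hr0 : 0 < r0) (q : ℝ) (hq : 1 < q) :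
    ∃ A : ℝ, 0 < A ∧ ∀ n, ((DF k (rr r0 n) n).card : ℝ) ≤ A * 4 ^ n * q ^ n := by
  have hκ : 0 < k - 1 := by linarith
  have hk' : 1 < k / (k - 1) := by rw [lt_div_iff₀ hκ]; linarith
  obtain ⟨K1, hK1, L1, h1⟩ := step k r0 hk hr0
  obtain ⟨K2, hK2, L2, h2⟩ := step (k / (k - 1)) ((k - 1) * r0) hk' (by positivity)
  have e1 : k / (k - 1) - 1 = 1 / (k - 1) := by field_simp; ring
  have e2 : k / (k - 1) / (k / (k - 1) - 1) = k := by rw [e1]; field_simp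
  have e3 : ∀ m, rr ((k - 1) * r0) m = (k - 1) * rr r0 m := by intro m; unfold rr; ring
  have e4 : ∀ m, (k / (k - 1) - 1) * ((k - 1) * rr r0 m) = rr r0 m := by
    intro m; rw [e1]; field_simp
  simp only [e3, e2, e4] at h2
  obtain ⟨A, hA, hAb⟩ := induct (fun n => ((DF k (rr r0 n) n).card : ℝ) / 4 ^ n +
    ((DF (k / (k - 1)) ((k - 1) * rr r0 n) n).card : ℝ) / 4 ^ n) (2 * (K1 + K2)) (by positivity)
    (max L1 L2) (by
      intro L hL n
      have a1 := h1 L ((le_max_left _ _).trans hL) n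
      have a2 := h2 L ((le_max_right _ _).trans hL) n
      rw [Finset.sum_add_distrib]
      set Z1 := ∑ m ∈ Finset.range (n + 1 - 2 * L),
        ((DF k (rr r0 m) m).card : ℝ) / 4 ^ m with hZ1
      set Z2 := ∑ m ∈ Finset.range (n + 1 - 2 * L),
        ((DF (k / (k - 1)) ((k - 1) * rr r0 m) m).card : ℝ) / 4 ^ m with hZ2
      have z1 : 0 ≤ Z1 := Finset.sum_nonneg fun m _ => by positivity
      have z2 : 0 ≤ Z2 := Finset.sum_nonneg fun m _ => by positivity
      have h4 : (0 : ℝ) < 4 ^ L := by positivity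
      have := mul_nonneg hK1.le z1
      have := mul_nonneg hK1.le z2
      have := mul_nonneg hK2.le z1
      have := mul_nonneg hK2.le z2
      have := mul_pos hK1 h4
      have := mul_pos hK2 h4
      nlinarith) q hq
  refine ⟨A, hA, fun n => ?_⟩
  have h3 := hAb n
  have h4 : 0 ≤ ((DF (k / (k - 1)) ((k - 1) * rr r0 n) n).card : ℝ) / 4 ^ n := by positivity
  have h5 : ((DF k (rr r0 n) n).card : ℝ) / 4 ^ n ≤ A * q ^ n := by linarith
  rw [div_le_iff₀ (by positivity)] at h5
  linarith

end RS

namespace RS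

lemma gauss_integrable (T v : ℝ) (hT : 0 < T) :
    Integrable fun x : ℝ => Real.cos (2 * π * v * x) * Real.exp (-(π / T ^ 2) * x ^ 2) := by
  have h1 : Integrable fun x : ℝ => Real.exp (-(π / T ^ 2) * x ^ 2) :=
    integrable_exp_neg_mul_sq (by positivity)
  refine h1.bdd_mul (c := 1) (by fun_prop) ?_
  filter_upwards with x
  exact Real.abs_cos_le_one _

lemma gauss_cos (T v : ℝ) (hT : 0 < T) :
    ∫ x : ℝ, Real.cos (2 * π * v * x) * Real.exp (-(π / T ^ 2) * x ^ 2) =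
      T * Real.exp (-(π * (T * v) ^ 2)) := by
  have hb : 0 < ((π / T ^ 2 : ℝ) : ℂ).re := by
    rw [Complex.ofReal_re]; positivity
  have h := fourierIntegral_gaussian hb ((2 * π * v : ℝ) : ℂ)
  have hInteg : Integrable fun x : ℝ => Complex.exp (Complex.I * ((2 * π * v : ℝ) : ℂ) * x) *
      Complex.exp (-((π / T ^ 2 : ℝ) : ℂ) * x ^ 2) := by
    have h1 : Integrable fun x : ℝ => Complex.exp (-((π / T ^ 2 : ℝ) : ℂ) * x ^ 2) :=
      integrable_cexp_neg_mul_sq hb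
    refine h1.bdd_mul (c := 1) (by fun_prop) ?_
    filter_upwards with x
    rw [Complex.norm_exp]; simp
  have hre : ∀ x : ℝ, Real.cos (2 * π * v * x) * Real.exp (-(π / T ^ 2) * x ^ 2) =
      RCLike.re (Complex.exp (Complex.I * ((2 * π * v : ℝ) : ℂ) * x) *
      Complex.exp (-((π / T ^ 2 : ℝ) : ℂ) * x ^ 2)) := by
    intro x
    have e1 : Complex.exp (-((π / T ^ 2 : ℝ) : ℂ) * x ^ 2) =
        ((Real.exp (-(π / T ^ 2) * x ^ 2) : ℝ) : ℂ) := by push_cast; rfl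
    have e2 : Complex.I * ((2 * π * v : ℝ) : ℂ) * x = ((2 * π * v * x : ℝ) : ℂ) * Complex.I := by
      push_cast; ring
    rw [e1, e2]
    change _ = Complex.re _
    rw [Complex.re_mul_ofReal, Complex.exp_ofReal_mul_I_re]
  simp_rw [hre]
  rw [integral_re hInteg, h]
  have e3 : ((π : ℂ) / ((π / T ^ 2 : ℝ) : ℂ)) ^ (1 / 2 : ℂ) = (T : ℂ) := by
    have : (π : ℂ) / ((π / T ^ 2 : ℝ) : ℂ) = ((T ^ 2 : ℝ) : ℂ) := by
      rw [← Complex.ofReal_div]; congr 1; field_simp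
    rw [this, show (1 / 2 : ℂ) = ((1 / 2 : ℝ) : ℂ) by push_cast; rfl,
      ← Complex.ofReal_cpow (by positivity), ← Real.sqrt_eq_rpow, Real.sqrt_sq hT.le]
  have e4 : -((2 * π * v : ℝ) : ℂ) ^ 2 / (4 * ((π / T ^ 2 : ℝ) : ℂ)) =
      ((-(π * (T * v) ^ 2) : ℝ) : ℂ) := by
    rw [show -((2 * π * v : ℝ) : ℂ) ^ 2 / (4 * ((π / T ^ 2 : ℝ) : ℂ)) =
      ((-(2 * π * v) ^ 2 / (4 * (π / T ^ 2)) : ℝ) : ℂ) by push_cast; rfl]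
    congr 1; field_simp; ring
  rw [e3, e4, ← Complex.ofReal_exp, ← Complex.ofReal_mul]
  exact Complex.ofReal_re _

lemma norm_sq_expand {ι : Type*} (s : Finset ι) (w μ : ι → ℝ) (α : ℝ) :
    ‖∑ i ∈ s, (w i : ℂ) * e (μ i * α)‖ ^ 2 =
      ∑ i ∈ s, ∑ j ∈ s, w i * w j * Real.cos (2 * π * (μ i - μ j) * α) := by
  have h : ((‖∑ i ∈ s, (w i : ℂ) * e (μ i * α)‖ ^ 2 : ℝ) : ℂ) =
      ∑ i ∈ s, ∑ j ∈ s, (w i * w j : ℂ) * e ((μ i - μ j) * α) := by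
    rw [Complex.ofReal_pow, ← Complex.mul_conj', map_sum, Finset.sum_mul_sum]
    refine Finset.sum_congr rfl fun i _ => Finset.sum_congr rfl fun j _ => ?_
    rw [map_mul, Complex.conj_ofReal, e_conj, sub_mul, sub_eq_add_neg, e_add]
    ring
  have h2 := congrArg Complex.re h
  rw [Complex.ofReal_re] at h2
  rw [h2, Complex.re_sum]
  refine Finset.sum_congr rfl fun i _ => ?_
  rw [Complex.re_sum]
  refine Finset.sum_congr rfl fun j _ => ?_
  rw [← Complex.ofReal_mul, Complex.re_ofReal_mul, e_re]
  congr 2; ring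

lemma mean_sq {ι : Type*} (s : Finset ι) (w μ : ι → ℝ) (T : ℝ) (hT : 0 < T) :
    ∫ α in (-T)..T, ‖∑ i ∈ s, (w i : ℂ) * e (μ i * α)‖ ^ 2 ≤
      Real.exp π * ∑ i ∈ s, ∑ j ∈ s, w i * w j * (T * Real.exp (-(π * (T * (μ i - μ j)) ^ 2))) := by
  set F : ℝ → ℝ := fun α => ‖∑ i ∈ s, (w i : ℂ) * e (μ i * α)‖ ^ 2 with hF
  have hFc : Continuous F := by
    refine (Continuous.norm ?_).pow 2
    refine continuous_finsetSum _ fun i _ => ?_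
    exact continuous_const.mul (e_cont.comp (by fun_prop))
  set g : ℝ → ℝ := fun x => Real.exp (-(π / T ^ 2) * x ^ 2) with hg
  have hterm : ∀ i j, Integrable fun x => w i * w j * (Real.cos (2 * π * (μ i - μ j) * x) * g x) :=
    fun i j => (gauss_integrable T (μ i - μ j) hT).const_mul _
  have hexp : ∀ x, F x * g x =
      ∑ i ∈ s, ∑ j ∈ s, w i * w j * (Real.cos (2 * π * (μ i - μ j) * x) * g x) := by
    intro x
    rw [hF]; simp only
    rw [norm_sq_expand, Finset.sum_mul]
    refine Finset.sum_congr rfl fun i _ => ?_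
    rw [Finset.sum_mul]
    refine Finset.sum_congr rfl fun j _ => ?_
    ring
  have hInteg : Integrable fun x => F x * g x := by
    simp_rw [hexp]
    exact integrable_finsetSum _ fun i _ => integrable_finsetSum _ fun j _ => hterm i j
  have hval : ∫ x, F x * g x = ∑ i ∈ s, ∑ j ∈ s, w i * w j *
      (T * Real.exp (-(π * (T * (μ i - μ j)) ^ 2))) := by
    simp_rw [hexp]
    rw [integral_finsetSum _ fun i _ => integrable_finsetSum _ fun j _ => hterm i j]
    refine Finset.sum_congr rfl fun i _ => ?_
    rw [integral_finsetSum _ fun j _ => hterm i j]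
    refine Finset.sum_congr rfl fun j _ => ?_
    rw [integral_const_mul, gauss_cos T _ hT]
  rw [← hval, ← integral_const_mul, intervalIntegral.integral_of_le (by linarith)]
  refine (setIntegral_mono_on (hFc.integrableOn_Ioc) (hInteg.const_mul _).integrableOn
    measurableSet_Ioc ?_).trans (setIntegral_le_integral (hInteg.const_mul _) ?_)
  · intro x hx
    have h1 : 1 ≤ Real.exp π * g x := by
      rw [hg]; simp only
      rw [← Real.exp_add]
      refine Real.one_le_exp ?_
      have h2 : x ^ 2 ≤ T ^ 2 := by
        rw [sq_le_sq, abs_of_pos hT, abs_le]; exact ⟨hx.1.le, hx.2⟩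
      have h3 : π / T ^ 2 * x ^ 2 ≤ π / T ^ 2 * T ^ 2 := mul_le_mul_of_nonneg_left h2 (by positivity)
      have h4 : π / T ^ 2 * T ^ 2 = π := by field_simp
      linarith
    have h0 : 0 ≤ F x := by rw [hF]; positivity
    nlinarith
  · filter_upwards with x
    have h0 : 0 ≤ F x := by rw [hF]; positivity
    have : 0 < g x := Real.exp_pos _
    show 0 ≤ Real.exp π * (F x * g x)
    positivity

lemma int_summable : Summable fun d : ℤ => 1 / (1 + (d : ℝ) ^ 2) := by
  have h1 : Summable fun d : ℤ => 1 / (d : ℝ) ^ 2 + (if d = 0 then 1 else 0 : ℝ) :=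
    (Real.summable_one_div_int_pow.2 (by norm_num)).add (hasSum_ite_eq 0 1).summable
  refine Summable.of_nonneg_of_le (fun d => by positivity) (fun d => ?_) h1
  by_cases hd : d = 0
  · simp [hd]
  · simp only [hd, if_false, add_zero]
    have : (d : ℝ) ≠ 0 := by exact_mod_cast hd
    gcongr
    linarith

lemma sum_r_sq {ι : Type*} (s : Finset ι) (b : ι → ℤ) (C : Finset ℤ) (f : ℤ → ℤ)
    (hf : Function.Injective f) :
    ∑ c ∈ C, ((s.filter fun i => b i = f c).card : ℝ) ^ 2 ≤
      (((s ×ˢ s).filter fun x => b x.1 = b x.2).card : ℝ) := by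
  classical
  have h1 : ∑ c ∈ C, (s.filter fun i => b i = f c).card ^ 2 ≤
      ((s ×ˢ s).filter fun x => b x.1 = b x.2).card := by
    have h2 : ∀ c, (s.filter fun i => b i = f c).card ^ 2 =
        ((s.filter fun i => b i = f c) ×ˢ (s.filter fun i => b i = f c)).card := by
      intro c; rw [Finset.card_product, sq]
    simp_rw [h2]
    rw [← Finset.card_biUnion]
    · refine Finset.card_le_card ?_
      intro x hx
      simp only [Finset.mem_biUnion, Finset.mem_product, Finset.mem_filter] at hx ⊢
      obtain ⟨c, -, ⟨h3, h4⟩, h5, h6⟩ := hx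
      exact ⟨⟨h3, h5⟩, by rw [h4, h6]⟩
    · intro c _ c' _ hcc
      rw [Function.onFun, Finset.disjoint_left]
      intro x hx hx'
      simp only [Finset.mem_product, Finset.mem_filter] at hx hx'
      exact hcc (hf (hx.1.2.symm.trans hx'.1.2))
  exact_mod_cast h1

lemma shift_count {ι : Type*} (s : Finset ι) (b : ι → ℤ) (d : ℤ) :
    (((s ×ˢ s).filter fun x => b x.1 - b x.2 = d).card : ℝ) ≤
      (((s ×ˢ s).filter fun x => b x.1 = b x.2).card : ℝ) := by
  classical
  set C := s.image b with hC
  have h1 : ((s ×ˢ s).filter fun x => b x.1 - b x.2 = d).card =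
      ∑ c ∈ C, (s.filter fun i => b i = c + d).card * (s.filter fun i => b i = c).card := by
    have h2 : ∀ c, (s.filter fun i => b i = c + d).card * (s.filter fun i => b i = c).card =
        ((s.filter fun i => b i = c + d) ×ˢ (s.filter fun i => b i = c)).card := by
      intro c; rw [Finset.card_product]
    simp_rw [h2]
    rw [← Finset.card_biUnion]
    · congr 1
      ext x
      simp only [Finset.mem_biUnion, Finset.mem_product, Finset.mem_filter, hC, Finset.mem_image]
      constructor
      · rintro ⟨⟨h3, h4⟩, h5⟩
        exact ⟨b x.2, ⟨x.2, h4, rfl⟩, ⟨h3, by linarith⟩, h4, rfl⟩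
      · rintro ⟨c, -, ⟨h3, h4⟩, h5, h6⟩
        exact ⟨⟨h3, h5⟩, by rw [h4, h6]; ring⟩
    · intro c _ c' _ hcc
      rw [Function.onFun, Finset.disjoint_left]
      intro x hx hx'
      simp only [Finset.mem_product, Finset.mem_filter] at hx hx'
      exact hcc (hx.2.2.symm.trans hx'.2.2)
  rw [h1]
  push_cast
  have h3 := sum_r_sq s b C (fun c => c + d) (fun x y h => by simpa using h)
  have h4 := sum_r_sq s b C (fun c => c) (fun x y h => h)
  have h5 : ∑ c ∈ C, ((s.filter fun i => b i = c + d).card : ℝ) * ((s.filter fun i => b i = c).card : ℝ)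
      ≤ ∑ c ∈ C, (((s.filter fun i => b i = c + d).card : ℝ) ^ 2 / 2 +
        ((s.filter fun i => b i = c).card : ℝ) ^ 2 / 2) := by
    refine Finset.sum_le_sum fun c _ => ?_
    nlinarith [sq_nonneg (((s.filter fun i => b i = c + d).card : ℝ) -
      ((s.filter fun i => b i = c).card : ℝ))]
  rw [Finset.sum_add_distrib, ← Finset.sum_div, ← Finset.sum_div] at h5
  linarith

lemma mean_sq_count : ∃ K : ℝ, 0 < K ∧ ∀ (ι : Type) (s : Finset ι) (w μ : ι → ℝ) (W T : ℝ),
    0 < T → (∀ i ∈ s, 0 ≤ w i) → (∀ i ∈ s, w i ≤ W) →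
    ∫ α in (-T)..T, ‖∑ i ∈ s, (w i : ℂ) * e (μ i * α)‖ ^ 2 ≤
      K * T * W ^ 2 * (((s ×ˢ s).filter fun x => |μ x.1 - μ x.2| ≤ 1 / T).card : ℝ) := by
  classical
  set G := ∑' d : ℤ, 1 / (1 + (d : ℝ) ^ 2) with hG
  have hG0 : 0 ≤ G := tsum_nonneg fun d => by positivity
  refine ⟨Real.exp π * (3 * G + 1), by positivity, fun ι s w μ W T hT hw0 hwW => ?_⟩
  refine (mean_sq s w μ T hT).trans ?_
  set b : ι → ℤ := fun i => ⌊T * μ i⌋ with hb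
  set A := ((s ×ˢ s).filter fun x => b x.1 = b x.2).card with hA
  have hAle : (A : ℝ) ≤ (((s ×ˢ s).filter fun x => |μ x.1 - μ x.2| ≤ 1 / T).card : ℝ) := by
    have : A ≤ ((s ×ˢ s).filter fun x => |μ x.1 - μ x.2| ≤ 1 / T).card := by
      refine Finset.card_le_card ?_
      intro x hx
      rw [Finset.mem_filter] at hx ⊢
      refine ⟨hx.1, ?_⟩
      have h1 := floor_eq_diff hx.2
      rw [← mul_sub, abs_mul, abs_of_pos hT] at h1
      rw [le_div_iff₀ hT]; linarith
    exact_mod_cast this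
  have hpt : ∀ i ∈ s, ∀ j ∈ s, w i * w j * (T * Real.exp (-(π * (T * (μ i - μ j)) ^ 2))) ≤
      W ^ 2 * T * (3 * (1 / (1 + ((b i - b j : ℤ) : ℝ) ^ 2))) := by
    intro i hi j hj
    have hwi := hw0 i hi
    have hwj := hw0 j hj
    have h1 : w i * w j ≤ W ^ 2 := by
      rw [sq]; exact mul_le_mul (hwW i hi) (hwW j hj) hwj (hwi.trans (hwW i hi))
    set y := T * (μ i - μ j) with hy
    have h2 : |((b i - b j : ℤ) : ℝ)| ≤ |y| + 1 := by
      have := floor_diff (T * μ i) (T * μ j)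
      rw [← mul_sub] at this
      push_cast; exact this
    set d := ((b i - b j : ℤ) : ℝ) with hd
    have h3 : 1 + d ^ 2 ≤ 3 * (1 + y ^ 2) := by
      have h4 : d ^ 2 ≤ (|y| + 1) ^ 2 := by
        rw [← sq_abs d]; exact pow_le_pow_left₀ (abs_nonneg _) h2 2
      nlinarith [sq_nonneg (|y| - 1), sq_abs y]
    have h5 : Real.exp (-(π * y ^ 2)) ≤ 3 * (1 / (1 + d ^ 2)) := by
      rw [Real.exp_neg, ← mul_div_assoc, mul_one, inv_le_comm₀ (Real.exp_pos _) (by positivity),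
        inv_div, div_le_iff₀ (by norm_num)]
      have h6 := Real.add_one_le_exp (π * y ^ 2)
      have h7 := Real.pi_gt_three
      nlinarith [sq_nonneg y]
    calc w i * w j * (T * Real.exp (-(π * y ^ 2))) ≤ W ^ 2 * (T * (3 * (1 / (1 + d ^ 2)))) := by
          refine mul_le_mul h1 (mul_le_mul_of_nonneg_left h5 hT.le) (by positivity) (by positivity)
      _ = _ := by ring
  have hsum : ∑ i ∈ s, ∑ j ∈ s, (1 / (1 + ((b i - b j : ℤ) : ℝ) ^ 2)) ≤ G * A := by
    rw [← Finset.sum_product' (f := fun i j => (1 / (1 + ((b i - b j : ℤ) : ℝ) ^ 2)))]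
    set D := (s ×ˢ s).image fun x => b x.1 - b x.2 with hD
    rw [← Finset.sum_fiberwise_of_maps_to (t := D) (g := fun x => b x.1 - b x.2)
      (fun x hx => Finset.mem_image_of_mem _ hx)]
    have h1 : ∀ d ∈ D, ∑ x ∈ (s ×ˢ s).filter (fun x => b x.1 - b x.2 = d),
        (1 / (1 + ((b x.1 - b x.2 : ℤ) : ℝ) ^ 2)) ≤ (1 / (1 + (d : ℝ) ^ 2)) * A := by
      intro d _
      rw [Finset.sum_congr rfl (g := fun _ => 1 / (1 + (d : ℝ) ^ 2))
        (fun x hx => by rw [(Finset.mem_filter.1 hx).2]), Finset.sum_const, nsmul_eq_mul, mul_comm]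
      exact mul_le_mul_of_nonneg_left (shift_count s b d) (by positivity)
    refine (Finset.sum_le_sum h1).trans ?_
    rw [← Finset.sum_mul]
    exact mul_le_mul_of_nonneg_right
      (int_summable.sum_le_tsum _ fun d _ => by positivity) (by positivity)
  have hfin : ∑ i ∈ s, ∑ j ∈ s, w i * w j * (T * Real.exp (-(π * (T * (μ i - μ j)) ^ 2))) ≤
      W ^ 2 * T * (3 * (G * A)) := by
    refine (Finset.sum_le_sum fun i hi => Finset.sum_le_sum fun j hj => hpt i hi j hj).trans ?_
    simp_rw [← Finset.mul_sum]
    exact mul_le_mul_of_nonneg_left (mul_le_mul_of_nonneg_left hsum (by norm_num)) (by positivity)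
  refine (mul_le_mul_of_nonneg_left hfin (Real.exp_pos _).le).trans ?_
  set B := (((s ×ˢ s).filter fun x => |μ x.1 - μ x.2| ≤ 1 / T).card : ℝ) with hB
  have h8 : 3 * (G * A) ≤ (3 * G + 1) * B := by
    have : G * A ≤ G * B := mul_le_mul_of_nonneg_left hAle hG0
    have : 0 ≤ B := by positivity
    nlinarith
  calc _ ≤ Real.exp π * (W ^ 2 * T * ((3 * G + 1) * B)) :=
        mul_le_mul_of_nonneg_left (mul_le_mul_of_nonneg_left h8 (by positivity)) (Real.exp_pos _).le
    _ = _ := by ring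

end RS

namespace RS

/-- the primes in the sum -/
noncomputable def Prs (δ X k : ℝ) : Finset ℕ :=
  (Finset.Icc 1 (Nat.floor X)).filter
    (fun p : ℕ => p.Prime ∧ δ * X ≤ (p : ℝ) ^ k ∧ (p : ℝ) ^ k ≤ X)

lemma geom_le (u : ℝ) (hu : 2 ≤ u) (M : ℕ) : ∑ n ∈ Finset.range (M + 1), u ^ n ≤ 2 * u ^ M := by
  induction M with
  | zero => simp
  | succ M ih =>
    rw [Finset.sum_range_succ, pow_succ]
    have : 0 < u ^ M := by positivity
    nlinarith

lemma count_DF (k r0 η : ℝ) (hk : 1 < k) (hr0 : 0 < r0) (hη : 0 < η) :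
    ∃ A : ℝ, 0 < A ∧ ∀ M : ℕ, ∑ n ∈ Finset.range (M + 1), ((DF k (rr r0 n) n).card : ℝ) ≤
      A * ((2 : ℝ) ^ M) ^ (2 + η) := by
  obtain ⟨A, hA, h⟩ := DF_bound k r0 hk hr0 (2 ^ η) (Real.one_lt_rpow (by norm_num) hη)
  refine ⟨2 * A, by positivity, fun M => ?_⟩
  have hu : (4 : ℝ) * 2 ^ η = 2 ^ (2 + η) := by
    rw [Real.rpow_add (by norm_num)]; norm_num
  have h2 : (2 : ℝ) ≤ 2 ^ (2 + η) := by
    rw [← hu]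
    have := Real.one_le_rpow (x := 2) (by norm_num) hη.le
    linarith
  have h1 : ∀ n ∈ Finset.range (M + 1), ((DF k (rr r0 n) n).card : ℝ) ≤ A * ((2 : ℝ) ^ (2 + η)) ^ n := by
    intro n _
    refine (h n).trans (le_of_eq ?_)
    rw [mul_assoc, ← mul_pow, hu]
  refine (Finset.sum_le_sum h1).trans ?_
  rw [← Finset.mul_sum]
  refine (mul_le_mul_of_nonneg_left (geom_le _ h2 M) hA.le).trans (le_of_eq ?_)
  have : ((2 : ℝ) ^ (2 + η)) ^ M = ((2 : ℝ) ^ M) ^ (2 + η) := by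
    rw [← Real.rpow_natCast, ← Real.rpow_mul (by norm_num), ← Real.rpow_natCast,
      ← Real.rpow_mul (by norm_num), mul_comm]
  rw [this]; ring

/-- quadruple to vector -/
def q4 (x : (ℕ × ℕ) × (ℕ × ℕ)) : Fin 4 → ℤ := ![(x.1.1 : ℤ), x.1.2, x.2.1, x.2.2]

lemma q4_inj : Function.Injective q4 := by
  intro x y h
  have h0 := congrFun h 0
  have h1 := congrFun h 1
  have h2 := congrFun h 2
  have h3 := congrFun h 3
  simp [q4] at h0 h1 h2 h3
  obtain ⟨⟨a, b⟩, c, d⟩ := x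
  obtain ⟨⟨a', b'⟩, c', d'⟩ := y
  simp_all

lemma count_quad (k δ ε : ℝ) (hk : 1 < k) (hδ0 : 0 < δ) (hδ1 : δ < 1) (hε : 0 < ε) :
    ∃ c1 : ℝ, 0 < c1 ∧ c1 ≤ 1 ∧ ∃ A : ℝ, 0 < A ∧ ∀ X : ℝ, 2 ≤ X →
    (((((Prs δ X k) ×ˢ (Prs δ X k)) ×ˢ ((Prs δ X k) ×ˢ (Prs δ X k))).filter
      fun x : (ℕ × ℕ) × (ℕ × ℕ) => |((x.1.1 : ℝ) ^ k + (x.1.2 : ℝ) ^ k) -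
        ((x.2.1 : ℝ) ^ k + (x.2.2 : ℝ) ^ k)| ≤ c1 * X ^ (1 - 2 / k)).card : ℝ) ≤
      A * X ^ (2 / k + ε) := by
  classical
  have hk0 : 0 < k := by linarith
  set r0 := Real.log (1 / δ) / k with hr0
  have hr0p : 0 < r0 := by
    have : 0 < Real.log (1 / δ) := Real.log_pos (by rw [lt_div_iff₀ hδ0]; linarith)
    positivity
  have hexp : Real.exp r0 ^ k = 1 / δ := by
    rw [← Real.exp_mul, hr0, div_mul_cancel₀ _ hk0.ne', Real.exp_log (by positivity)]
  obtain ⟨A, hA, hAb⟩ := count_DF k r0 (k * ε) hk hr0p (by positivity)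
  have hd0 : 0 < δ ^ (1 - 2 / k) := by positivity
  refine ⟨min 1 (δ ^ (1 - 2 / k)), by positivity, min_le_left _ _, A, hA, fun X hX => ?_⟩
  have hX0 : 0 < X := by linarith
  set c1 := min 1 (δ ^ (1 - 2 / k)) with hc1
  set Y := X ^ (1 / k) with hY
  have hY1 : 1 ≤ Y := Real.one_le_rpow (by linarith) (by positivity)
  have hYk : Y ^ k = X := by
    rw [hY, ← Real.rpow_mul hX0.le]; field_simp; simp
  set M := Nat.log 2 ⌊Y⌋₊ with hM
  have hfl : ⌊Y⌋₊ ≠ 0 := by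
    have : 1 ≤ ⌊Y⌋₊ := Nat.le_floor (by exact_mod_cast hY1)
    omega
  have hM2 : (2 : ℝ) ^ M ≤ Y := by
    have h1 : 2 ^ M ≤ ⌊Y⌋₊ := Nat.pow_log_le_self 2 hfl
    have h2 : ((2 ^ M : ℕ) : ℝ) ≤ Y := le_trans (by exact_mod_cast h1) (Nat.floor_le (by linarith))
    exact_mod_cast h2
  set Fs := (((Prs δ X k) ×ˢ (Prs δ X k)) ×ˢ ((Prs δ X k) ×ˢ (Prs δ X k))).filter
      fun x : (ℕ × ℕ) × (ℕ × ℕ) => |((x.1.1 : ℝ) ^ k + (x.1.2 : ℝ) ^ k) -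
        ((x.2.1 : ℝ) ^ k + (x.2.2 : ℝ) ^ k)| ≤ c1 * X ^ (1 - 2 / k) with hFs
  have hP : ∀ p ∈ Prs δ X k, (0 < p) ∧ δ * X ≤ (p : ℝ) ^ k ∧ (p : ℝ) ^ k ≤ X ∧ (p : ℝ) ≤ Y := by
    intro p hp
    unfold Prs at hp
    rw [Finset.mem_filter, Finset.mem_Icc] at hp
    refine ⟨hp.1.1, hp.2.2.1, hp.2.2.2, ?_⟩
    have := hp.2.2.2
    rw [← hYk] at this
    exact (Real.rpow_le_rpow_iff (by positivity) (by positivity) hk0).1 this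
  have hPP : ∀ p ∈ Prs δ X k, ∀ q ∈ Prs δ X k, (p : ℝ) ≤ Real.exp r0 * q := by
    intro p hp q hq
    obtain ⟨p0, p1, p2, -⟩ := hP p hp
    obtain ⟨q0, q1, q2, -⟩ := hP q hq
    have : (p : ℝ) ^ k ≤ (Real.exp r0 * q) ^ k := by
      rw [Real.mul_rpow (Real.exp_pos _).le (by positivity), hexp]
      rw [div_mul_eq_mul_div, one_mul, le_div_iff₀ hδ0]
      nlinarith
    exact (Real.rpow_le_rpow_iff (by positivity) (by positivity) hk0).1 this
  have hlow : ∀ p ∈ Prs δ X k, c1 * X ^ (1 - 2 / k) ≤ (p : ℝ) ^ (k - 2) := by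
    intro p hp
    obtain ⟨p0, p1, p2, -⟩ := hP p hp
    have p0' : (0 : ℝ) < p := by exact_mod_cast p0
    have e1 : (p : ℝ) ^ (k - 2) = ((p : ℝ) ^ k) ^ (1 - 2 / k) := by
      rw [← Real.rpow_mul p0'.le]; congr 1; field_simp
    rw [e1]
    have hXp : 0 < X ^ (1 - 2 / k) := by positivity
    rcases le_total 0 (1 - 2 / k) with hs | hs
    · calc c1 * X ^ (1 - 2 / k) ≤ δ ^ (1 - 2 / k) * X ^ (1 - 2 / k) :=
            mul_le_mul_of_nonneg_right (min_le_right _ _) hXp.le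
        _ = (δ * X) ^ (1 - 2 / k) := (Real.mul_rpow hδ0.le hX0.le).symm
        _ ≤ _ := Real.rpow_le_rpow (by positivity) p1 hs
    · calc c1 * X ^ (1 - 2 / k) ≤ 1 * X ^ (1 - 2 / k) :=
            mul_le_mul_of_nonneg_right (min_le_left _ _) hXp.le
        _ = X ^ (1 - 2 / k) := one_mul _
        _ ≤ _ := Real.rpow_le_rpow_of_nonpos (by positivity) p2 hs
  have hsub : Fs.image q4 ⊆ (Finset.range (M + 1)).biUnion fun n => DF k (rr r0 n) n := by
    intro v hv
    obtain ⟨x, hx, rfl⟩ := Finset.mem_image.1 hv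
    rw [hFs, Finset.mem_filter, Finset.mem_product, Finset.mem_product, Finset.mem_product] at hx
    obtain ⟨⟨⟨m1, m2⟩, m3, m4⟩, hV⟩ := hx
    obtain ⟨⟨a, b⟩, c, d⟩ := x
    simp only at m1 m2 m3 m4 hV
    have hd := hP d m4
    set n := Nat.log 2 d with hn
    have hn1 : 2 ^ n ≤ d := Nat.pow_log_le_self 2 hd.1.ne'
    have hn2 : d < 2 ^ (n + 1) := Nat.lt_pow_succ_log_self (by norm_num) _
    have hnM : n ≤ M := Nat.log_mono_right (Nat.le_floor hd.2.2.2)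
    refine Finset.mem_biUnion.2 ⟨n, Finset.mem_range.2 (by omega), ?_⟩
    have hrr : Real.exp r0 ≤ Real.exp (rr r0 n) := by
      rw [Real.exp_le_exp]; unfold rr
      have : (0 : ℝ) < (1 / 2) ^ n := by positivity
      nlinarith
    have hc : ∀ p ∈ Prs δ X k, ∀ q ∈ Prs δ X k, (((p : ℕ) : ℤ) : ℝ) ≤
        Real.exp (rr r0 n) * (((q : ℕ) : ℤ) : ℝ) := by
      intro p hp q hq
      push_cast
      exact (hPP p hp q hq).trans (mul_le_mul_of_nonneg_right hrr (by positivity))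
    rw [mem_DF]
    refine ⟨?_, ?_, ?_, ?_, ?_⟩
    · intro j
      fin_cases j
      · exact Int.natCast_pos.2 (hP a m1).1
      · exact Int.natCast_pos.2 (hP b m2).1
      · exact Int.natCast_pos.2 (hP c m3).1
      · exact Int.natCast_pos.2 (hP d m4).1
    · show (2 : ℤ) ^ n ≤ (d : ℤ)
      exact_mod_cast hn1
    · show (d : ℤ) < (2 : ℤ) ^ (n + 1)
      exact_mod_cast hn2
    · intro j
      fin_cases j
      · exact ⟨hc a m1 d m4, hc d m4 a m1⟩
      · exact ⟨hc b m2 d m4, hc d m4 b m2⟩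
      · exact ⟨hc c m3 d m4, hc d m4 c m3⟩
      · exact ⟨hc d m4 d m4, hc d m4 d m4⟩
    · have := hV.trans (hlow d m4)
      rw [← sub_sub] at this
      simpa [q4] using this
  have h1 : (Fs.card : ℝ) ≤ ∑ n ∈ Finset.range (M + 1), ((DF k (rr r0 n) n).card : ℝ) := by
    rw [← Finset.card_image_of_injective Fs q4_inj]
    have := (Finset.card_le_card hsub).trans Finset.card_biUnion_le
    exact_mod_cast this
  refine h1.trans ((hAb M).trans ?_)
  refine mul_le_mul_of_nonneg_left ?_ hA.le
  calc ((2 : ℝ) ^ M) ^ (2 + k * ε) ≤ Y ^ (2 + k * ε) :=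
        Real.rpow_le_rpow (by positivity) hM2 (by positivity)
    _ = X ^ (2 / k + ε) := by
      rw [hY, ← Real.rpow_mul hX0.le]; congr 1; field_simp

lemma Sk_sq (δ X k α : ℝ) : ‖Sk δ X k α‖ ^ 4 =
    ‖∑ x ∈ (Prs δ X k) ×ˢ (Prs δ X k), ((Real.log x.1 * Real.log x.2 : ℝ) : ℂ) *
      e (((x.1 : ℝ) ^ k + (x.2 : ℝ) ^ k) * α)‖ ^ 2 := by
  have : (Sk δ X k α) ^ 2 = ∑ x ∈ (Prs δ X k) ×ˢ (Prs δ X k),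
      ((Real.log x.1 * Real.log x.2 : ℝ) : ℂ) * e (((x.1 : ℝ) ^ k + (x.2 : ℝ) ^ k) * α) := by
    rw [sq]
    unfold Sk
    rw [Finset.sum_mul_sum, ← Finset.sum_product']
    refine Finset.sum_congr rfl fun x _ => ?_
    rw [add_mul, e_add]; push_cast; ring
  rw [← this, norm_pow, ← pow_mul]

lemma Sk_cont (δ X k : ℝ) : Continuous fun α => ‖Sk δ X k α‖ ^ 4 := by
  refine (Continuous.norm ?_).pow 4
  unfold Sk
  refine continuous_finsetSum _ fun i _ => ?_
  exact continuous_const.mul (e_cont.comp (by fun_prop))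

end RS

theorem Sk_fourth_moment (k δ ε : ℝ) (hk : 1 < k) (hδ0 : 0 < δ) (hδ1 : δ < 1) (hε : 0 < ε) :
    ∃ C > 0, ∀ X ≥ (2 : ℝ), ∀ τ > (0 : ℝ),
      ∫ α in (-τ)..τ, ‖Sk δ X k α‖ ^ 4 ≤
        C * (τ * X ^ (2 / k) + X ^ (4 / k - 1)) * X ^ ε := by
  obtain ⟨c1, hc1, hc11, A, hA, hcount⟩ := RS.count_quad k δ (ε / 2) hk hδ0 hδ1 (by positivity)
  obtain ⟨K, hK, hmean⟩ := RS.mean_sq_count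
  refine ⟨K * (8 / ε) ^ 4 * A / c1, by positivity, fun X hX τ hτ => ?_⟩
  have hX0 : 0 < X := by linarith
  have hk0 : 0 < k := by linarith
  set T0 := X ^ (2 / k - 1) / c1 with hT0
  have hT0p : 0 < T0 := by positivity
  set T := max τ T0 with hT
  have hTp : 0 < T := lt_max_of_lt_left hτ
  have hTle : T ≤ τ + T0 := max_le (by linarith) (by linarith)
  have h1 : ∫ α in (-τ)..τ, ‖Sk δ X k α‖ ^ 4 ≤ ∫ α in (-T)..T, ‖Sk δ X k α‖ ^ 4 := by
    refine intervalIntegral.integral_mono_interval (neg_le_neg (le_max_left _ _)) (by linarith)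
      (le_max_left _ _) ?_ ((RS.Sk_cont δ X k).intervalIntegrable _ _)
    filter_upwards with x
    positivity
  refine h1.trans ?_
  simp_rw [RS.Sk_sq]
  have hlog : ∀ p ∈ RS.Prs δ X k, 0 ≤ Real.log p ∧ Real.log p ≤ Real.log X := by
    intro p hp
    unfold RS.Prs at hp
    rw [Finset.mem_filter, Finset.mem_Icc] at hp
    have hp1 : (1 : ℝ) ≤ p := by exact_mod_cast hp.1.1
    have hp2 : (p : ℝ) ≤ X := (Nat.le_floor_iff hX0.le).1 hp.1.2
    exact ⟨Real.log_nonneg hp1, Real.log_le_log (by linarith) hp2⟩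
  have hlX : 0 ≤ Real.log X := Real.log_nonneg (by linarith)
  refine (hmean (ℕ × ℕ) (RS.Prs δ X k ×ˢ RS.Prs δ X k)
    (fun x => Real.log x.1 * Real.log x.2) (fun x => (x.1 : ℝ) ^ k + (x.2 : ℝ) ^ k)
    (Real.log X * Real.log X) T hTp ?_ ?_).trans ?_
  · intro x hx
    rw [Finset.mem_product] at hx
    exact mul_nonneg (hlog _ hx.1).1 (hlog _ hx.2).1
  · intro x hx
    rw [Finset.mem_product] at hx
    exact mul_le_mul (hlog _ hx.1).2 (hlog _ hx.2).2 (hlog _ hx.2).1 hlX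
  have hTi : 1 / T ≤ c1 * X ^ (1 - 2 / k) := by
    have h2 : 1 / T ≤ 1 / T0 := one_div_le_one_div_of_le hT0p (le_max_right _ _)
    refine h2.trans (le_of_eq ?_)
    rw [hT0, one_div_div, div_eq_mul_inv, ← Real.rpow_neg hX0.le]
    congr 2; ring
  have hcnt : ((((RS.Prs δ X k ×ˢ RS.Prs δ X k) ×ˢ (RS.Prs δ X k ×ˢ RS.Prs δ X k)).filter
      fun x : (ℕ × ℕ) × (ℕ × ℕ) => |((x.1.1 : ℝ) ^ k + (x.1.2 : ℝ) ^ k) -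
        ((x.2.1 : ℝ) ^ k + (x.2.2 : ℝ) ^ k)| ≤ 1 / T).card : ℝ) ≤ A * X ^ (2 / k + ε / 2) := by
    refine le_trans ?_ (hcount X hX)
    have := Finset.card_le_card (Finset.monotone_filter_right
      ((RS.Prs δ X k ×ˢ RS.Prs δ X k) ×ˢ (RS.Prs δ X k ×ˢ RS.Prs δ X k))
      (p := fun x : (ℕ × ℕ) × (ℕ × ℕ) => |((x.1.1 : ℝ) ^ k + (x.1.2 : ℝ) ^ k) -
        ((x.2.1 : ℝ) ^ k + (x.2.2 : ℝ) ^ k)| ≤ 1 / T)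
      (q := fun x : (ℕ × ℕ) × (ℕ × ℕ) => |((x.1.1 : ℝ) ^ k + (x.1.2 : ℝ) ^ k) -
        ((x.2.1 : ℝ) ^ k + (x.2.2 : ℝ) ^ k)| ≤ c1 * X ^ (1 - 2 / k))
      (fun x _ hx => le_trans hx hTi))
    exact_mod_cast this
  have hlog4 : (Real.log X * Real.log X) ^ 2 ≤ (8 / ε) ^ 4 * X ^ (ε / 2) := by
    have h2 := Real.log_le_rpow_div hX0.le (show 0 < ε / 8 by positivity)
    have h3 : (Real.log X * Real.log X) ^ 2 = Real.log X ^ 4 := by ring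
    rw [h3]
    refine (pow_le_pow_left₀ hlX h2 4).trans (le_of_eq ?_)
    have h4 : (X ^ (ε / 8)) ^ 4 = X ^ (ε / 2) := by
      rw [← Real.rpow_natCast, ← Real.rpow_mul hX0.le]; congr 1; push_cast; ring
    rw [div_pow, h4]; field_simp
  have hxx : X ^ (ε / 2) * X ^ (2 / k + ε / 2) = X ^ (2 / k) * X ^ ε := by
    rw [← Real.rpow_add hX0, ← Real.rpow_add hX0]; congr 1; ring
  have hT0x : T0 * X ^ (2 / k) = X ^ (4 / k - 1) / c1 := by
    rw [hT0, div_mul_eq_mul_div, ← Real.rpow_add hX0]; congr 2; ring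
  calc _ ≤ K * T * ((8 / ε) ^ 4 * X ^ (ε / 2)) * (A * X ^ (2 / k + ε / 2)) :=
        mul_le_mul (mul_le_mul_of_nonneg_left hlog4 (by positivity)) hcnt (by positivity)
          (by positivity)
    _ = K * (8 / ε) ^ 4 * A * X ^ ε * (T * X ^ (2 / k)) := by
        rw [show K * T * ((8 / ε) ^ 4 * X ^ (ε / 2)) * (A * X ^ (2 / k + ε / 2)) =
          K * T * (8 / ε) ^ 4 * A * (X ^ (ε / 2) * X ^ (2 / k + ε / 2)) by ring, hxx]
        ring
    _ ≤ K * (8 / ε) ^ 4 * A * X ^ ε * ((τ * X ^ (2 / k) + X ^ (4 / k - 1)) / c1) := by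
        refine mul_le_mul_of_nonneg_left ?_ (by positivity)
        have h2 : T * X ^ (2 / k) ≤ (τ + T0) * X ^ (2 / k) :=
          mul_le_mul_of_nonneg_right hTle (by positivity)
        rw [add_mul, hT0x] at h2
        refine h2.trans ?_
        rw [add_div]
        have h3 : τ * X ^ (2 / k) ≤ τ * X ^ (2 / k) / c1 :=
          le_div_self (by positivity) hc1 hc11
        linarith
    _ = _ := by ring
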